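/- Let 2 ≤ n ≤ 4 and let k ≥ 1 be an integer. Assume f satisfies (f1), (f2), and (f4'): (F/f)'(s) ≥ (n−2)/2 for all s > β. Then the problem u''(r) + ((n−1)/r)u'(r) + f(u(r)) = 0 on (0,∞), u'(0) = 0, lim_{r→∞} u(r) = 0, has at most one solution u with u(0) > 0 having exactly k−1 sign changes in (0,∞); i.e., if u₁ and u₂ are two such solutions, then u₁(0) = u₂(0) and u₁ ≡ u₂. -/

import Mathlib

open Set Filter MeasureTheory

namespace Paper

noncomputable section

/-- `F s = ∫₀ˢ f t dt`. -/
def Fint (f : ℝ → ℝ) (s : ℝ) : ℝ := ∫ t in (0:ℝ)..s, f t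

/-- Hypothesis (f1): `f` is odd, `f 0 = 0`, there are `β > b > 0` with `f > 0` on `(b,∞)`,
`f ≤ 0`, `f ≢ 0` on `[0,b]`, and `F β = 0`. -/
def Hf1 (f : ℝ → ℝ) (b β : ℝ) : Prop :=
  (∀ s, f (-s) = -f s) ∧ f 0 = 0 ∧ 0 < b ∧ b < β ∧
    (∀ s, b < s → 0 < f s) ∧ (∀ s ∈ Icc (0:ℝ) b, f s ≤ 0) ∧
    (∃ s ∈ Icc (0:ℝ) b, f s ≠ 0) ∧ Fint f β = 0

/-- Hypothesis (f2): `f` continuous on `[0,∞)`, C¹ on `(0,∞)`, `f' ∈ L¹(0,1)`. -/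
def Hf2 (f : ℝ → ℝ) : Prop :=
  ContinuousOn f (Ici 0) ∧ (∀ s : ℝ, 0 < s → DifferentiableAt ℝ f s) ∧
    ContinuousOn (deriv f) (Ioi 0) ∧ IntegrableOn (deriv f) (Ioo 0 1)

/-- Hypothesis (f3): `f s ≥ f' s * (s - β)` for `s ≥ β`. -/
def Hf3 (f : ℝ → ℝ) (β : ℝ) : Prop := ∀ s, β ≤ s → deriv f s * (s - β) ≤ f s

/-- Hypothesis (f4): `(F/f)' s ≥ (n-2)/(2n)` for `s > β`. -/
def Hf4 (n : ℕ) (f : ℝ → ℝ) (β : ℝ) : Prop :=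
  ∀ s, β < s → ((n : ℝ) - 2) / (2 * (n : ℝ)) ≤ deriv (fun t => Fint f t / f t) s

/-- Hypothesis (f4'): `(F/f)' s ≥ (n-2)/2` for `s > β`. -/
def Hf4' (n : ℕ) (f : ℝ → ℝ) (β : ℝ) : Prop :=
  ∀ s, β < s → ((n : ℝ) - 2) / 2 ≤ deriv (fun t => Fint f t / f t) s

/-- Hypothesis (f5): `s ↦ s f' s / f s` is nonincreasing on `[β,∞)`. -/
def Hf5 (f : ℝ → ℝ) (β : ℝ) : Prop := AntitoneOn (fun s => s * deriv f s / f s) (Ici β)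

/-- Hypothesis (f6): `β f' β / f β ≤ n/(n-2)`. -/
def Hf6 (n : ℕ) (f : ℝ → ℝ) (β : ℝ) : Prop := β * deriv f β / f β ≤ (n : ℝ) / ((n : ℝ) - 2)

/-- Hypothesis (f1'): `f 0 = 0` and `s f s > 0` for `s > 0`. -/
def Hf1' (f : ℝ → ℝ) : Prop := f 0 = 0 ∧ ∀ s : ℝ, 0 < s → 0 < s * f s

/-- Hypothesis (f3'): `f s ≥ s f' s` for `s > 0`, with strict inequality at points
arbitrarily close to `0`. -/
def Hf3' (f : ℝ → ℝ) : Prop :=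
  (∀ s : ℝ, 0 < s → s * deriv f s ≤ f s) ∧
    ∀ ε : ℝ, 0 < ε → ∃ s ∈ Ioo (0:ℝ) ε, s * deriv f s < f s

/-- `v` is a C² solution of (E) on `(0,∞)`, continuous on `[0,∞)`,
with `v 0 = α` and `v' 0 = 0`. -/
def IVPsol (n : ℕ) (f : ℝ → ℝ) (α : ℝ) (v : ℝ → ℝ) : Prop :=
  v 0 = α ∧ deriv v 0 = 0 ∧ ContinuousOn v (Ici 0) ∧
    (∀ r : ℝ, 0 < r → DifferentiableAt ℝ v r ∧ DifferentiableAt ℝ (deriv v) r) ∧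
    (∀ r : ℝ, 0 < r → deriv (deriv v) r + ((n : ℝ) - 1) / r * deriv v r + f (v r) = 0)

/-- The family `α ↦ u α` of solutions of the IVP, with `u α r` and `u' α r`
continuous in `(α, r)`. -/
def Family (n : ℕ) (f : ℝ → ℝ) (u : ℝ → ℝ → ℝ) : Prop :=
  (∀ α : ℝ, 0 < α → IVPsol n f α (u α)) ∧
    ContinuousOn (fun p : ℝ × ℝ => u p.1 p.2) (Ioi 0 ×ˢ Ici 0) ∧
    ContinuousOn (fun p : ℝ × ℝ => deriv (u p.1) p.2) (Ioi 0 ×ˢ Ici 0)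

/-- The set whose supremum is `Z_k α`, given `T = T_{k-1} α`. -/
def ZsetAux (u : ℝ → ℝ → ℝ) (k : ℕ) (T α : ℝ) : Set ℝ :=
  {r | T < r ∧ ∀ s ∈ Ioo T r, (-1 : ℝ) ^ k * u α s < 0 ∧ 0 < (-1 : ℝ) ^ k * deriv (u α) s}

/-- The pair `(Z_k, T_k)`, with `T₀ = 0`;
`Z_k α = sup {r > T_{k-1} α | (-1)^k u < 0, (-1)^k u' > 0 on (T_{k-1} α, r)}` and
`T_k α = inf {r > Z_k α | u'(r, α) = 0}`. -/
def ZT (u : ℝ → ℝ → ℝ) : ℕ → (ℝ → ℝ) × (ℝ → ℝ)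
  | 0 => (fun _ => 0, fun _ => 0)
  | k + 1 =>
    let Z : ℝ → ℝ := fun α => sSup (ZsetAux u (k + 1) ((ZT u k).2 α) α)
    (Z, fun α => sInf {r | Z α < r ∧ deriv (u α) r = 0})

/-- `Z_k α` (as a real number; the genuine value when the defining set is bounded above). -/
def Zk (u : ℝ → ℝ → ℝ) (k : ℕ) (α : ℝ) : ℝ := (ZT u k).1 α

/-- `T_k α`, with `T₀ = 0`. -/
def Tk (u : ℝ → ℝ → ℝ) (k : ℕ) (α : ℝ) : ℝ := (ZT u k).2 α

/-- The defining set of `Z_k α`; `Z_k α = ∞` iff this set is unbounded above. -/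
def ZsetK (u : ℝ → ℝ → ℝ) (k : ℕ) (α : ℝ) : Set ℝ := ZsetAux u k (Tk u (k - 1) α) α

open Classical in
/-- The value of `u (·, α)` at `Z_k α`, as a limit `r → ∞` when `Z_k α = ∞`. -/
def uAtZ (u : ℝ → ℝ → ℝ) (k : ℕ) (α : ℝ) : ℝ :=
  if BddAbove (ZsetK u k α) then u α (Zk u k α) else limUnder atTop (u α)

open Classical in
/-- The value of `u' (·, α)` at `Z_k α`, as a limit `r → ∞` when `Z_k α = ∞`. -/
def duAtZ (u : ℝ → ℝ → ℝ) (k : ℕ) (α : ℝ) : ℝ :=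
  if BddAbove (ZsetK u k α) then deriv (u α) (Zk u k α) else limUnder atTop (deriv (u α))

open Classical in
/-- `Z_k α` as an extended real number. -/
def ZkE (u : ℝ → ℝ → ℝ) (k : ℕ) (α : ℝ) : WithTop ℝ :=
  if BddAbove (ZsetK u k α) then (Zk u k α : WithTop ℝ) else ⊤

/-- Membership in `F̃_k` (for `α ∈ N_{k-1}`): `(-1)^k u' (r, α) < 0` for all `r > Z_{k-1} α`. -/
def Ftil (u : ℝ → ℝ → ℝ) (k : ℕ) (α : ℝ) : Prop :=
  ∀ r, Zk u (k - 1) α < r → (-1 : ℝ) ^ k * deriv (u α) r < 0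

/-- The sets `N_k` (with `N₀ := (0,∞)`). -/
def Nk (u : ℝ → ℝ → ℝ) : ℕ → Set ℝ
  | 0 => Ioi 0
  | 1 => {α | 0 < α ∧ uAtZ u 1 α = 0 ∧ duAtZ u 1 α < 0}
  | k + 2 => {α | α ∈ Nk u (k + 1) ∧ ¬Ftil u (k + 2) α ∧ uAtZ u (k + 2) α = 0 ∧
      0 < (-1 : ℝ) ^ (k + 2) * duAtZ u (k + 2) α}

/-- The sets `G_k`. -/
def Gk (u : ℝ → ℝ → ℝ) : ℕ → Set ℝ
  | 0 => ∅
  | 1 => {α | 0 < α ∧ uAtZ u 1 α = 0 ∧ duAtZ u 1 α = 0}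
  | k + 2 => {α | α ∈ Nk u (k + 1) ∧ ¬Ftil u (k + 2) α ∧ uAtZ u (k + 2) α = 0 ∧
      duAtZ u (k + 2) α = 0}

/-- The set `F̃_k` (for `k ≥ 2`). -/
def FtilSet (u : ℝ → ℝ → ℝ) (k : ℕ) : Set ℝ := {α | α ∈ Nk u (k - 1) ∧ Ftil u k α}

/-- The set `F_k` (for `k ≥ 2`). -/
def Fk (u : ℝ → ℝ → ℝ) (k : ℕ) : Set ℝ :=
  {α | α ∈ Nk u (k - 1) ∧ ¬Ftil u k α ∧ (-1 : ℝ) ^ k * uAtZ u k α < 0}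

/-- The sets `P_k`. -/
def Pk (u : ℝ → ℝ → ℝ) : ℕ → Set ℝ
  | 0 => ∅
  | 1 => {α | 0 < α ∧ 0 < uAtZ u 1 α}
  | k + 2 => FtilSet u (k + 2) ∪ Fk u (k + 2)

/-- The set of extremal points (zeros of `u' (·, α)`) in `[0, A]`. -/
def ExtSet (u : ℝ → ℝ → ℝ) (α A : ℝ) : Set ℝ := {r | r ∈ Icc 0 A ∧ deriv (u α) r = 0}

/-- The conclusion of the δ₁-lemma (Lemma 4.1): every solution with initial value in
`(α*-δ₁, α*+δ₁)` has exactly `k` extremal points in `[0, T_{k-1}(α*) + a]`, with minimum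
values `< -β` and maximum values `> β`; moreover any two such solutions intersect between
any two of their consecutive extremal points, and in `(T_{k-1}(α*), Z_k(α*))`. -/
def DeltaOneLemma (f : ℝ → ℝ) (β : ℝ) (u : ℝ → ℝ → ℝ) (k : ℕ) (αs a δ₁ : ℝ) : Prop :=
  0 < a ∧ 0 < δ₁ ∧
    (∀ α ∈ Ioo (αs - δ₁) (αs + δ₁),
      (ExtSet u α (Tk u (k - 1) αs + a)).Finite ∧
        (ExtSet u α (Tk u (k - 1) αs + a)).ncard = k ∧
        ∀ r ∈ ExtSet u α (Tk u (k - 1) αs + a),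
          (IsLocalMin (u α) r → u α r < -β) ∧ (IsLocalMax (u α) r → β < u α r)) ∧
    ∀ α₁ ∈ Ioo (αs - δ₁) (αs + δ₁), ∀ α₂ ∈ Ioo (αs - δ₁) (αs + δ₁), α₁ < α₂ →
      (∀ i : ℕ, 1 ≤ i → i ≤ k - 1 →
        ∃ t, max (Tk u (i - 1) α₁) (Tk u (i - 1) α₂) < t ∧
          t < min (Tk u i α₁) (Tk u i α₂) ∧ u α₁ t = u α₂ t) ∧
      ∃ t, Tk u (k - 1) αs < t ∧ (BddAbove (ZsetK u k αs) → t < Zk u k αs) ∧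
        u α₁ t = u α₂ t

/-- `ρ` is the inverse of the monotone branch of `v` on `[t₁, t₂]`, whose set of values
is `[m, M]`. -/
def InvBranch (v ρ : ℝ → ℝ) (t₁ t₂ m M : ℝ) : Prop :=
  (∀ s ∈ Icc m M, ρ s ∈ Icc t₁ t₂ ∧ v (ρ s) = s) ∧
    ∀ s ∈ Ioo m M, HasDerivAt ρ (1 / deriv v (ρ s)) s

/-- `ρ` inverts a decreasing branch of `v` over the value interval `[m, M]`, along which
`(v')² + 2F > 0`. -/
def DecBranchInv (f : ℝ → ℝ) (v ρ : ℝ → ℝ) (m M : ℝ) : Prop :=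
  ∀ s ∈ Icc m M, 0 ≤ ρ s ∧ v (ρ s) = s ∧ deriv v (ρ s) < 0 ∧
    HasDerivAt ρ (1 / deriv v (ρ s)) s ∧ 0 < (deriv v (ρ s)) ^ 2 + 2 * Fint f s

/-- The functional `Q(s) = -4 (F/f)(s) r/r' - r²/(r')² - 2 r² F(s) + H(s)` computed along
the branch inverse `ρ`. -/
def Qfun (f H ρ : ℝ → ℝ) (s : ℝ) : ℝ :=
  -4 * (Fint f s / f s) * (ρ s / deriv ρ s) - (ρ s) ^ 2 / (deriv ρ s) ^ 2 -
    2 * (ρ s) ^ 2 * Fint f s + H s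

/-- The functional `P(s) = -2n (F/f)(s) r^{n-1}/r' - r^n/(r')² - 2 r^n F(s)`. -/
def Pfun (n : ℕ) (f : ℝ → ℝ) (ρ : ℝ → ℝ) (s : ℝ) : ℝ :=
  -(2 * (n : ℝ)) * (Fint f s / f s) * (ρ s ^ (n - 1) / deriv ρ s) -
    ρ s ^ n / (deriv ρ s) ^ 2 - 2 * ρ s ^ n * Fint f s

/-- The functional `W(s) = r(s) √((u'(r(s)))² + 2 F(s))`. -/
def Wfun (f v ρ : ℝ → ℝ) (s : ℝ) : ℝ :=
  ρ s * Real.sqrt ((deriv v (ρ s)) ^ 2 + 2 * Fint f s)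

/-- The functional `W̃(s) = r(s)^{n-1} √((u'(r(s)))² + 2 F(s))`. -/
def Wtil (n : ℕ) (f : ℝ → ℝ) (v ρ : ℝ → ℝ) (s : ℝ) : ℝ :=
  ρ s ^ (n - 1) * Real.sqrt ((deriv v (ρ s)) ^ 2 + 2 * Fint f s)

/-- `v` changes sign at `z ∈ (0,∞)`: `v z = 0` and `v` takes both signs in every
neighborhood of `z` (within `(0,∞)`). -/
def SignChange (v : ℝ → ℝ) (z : ℝ) : Prop :=
  v z = 0 ∧ ∀ ε : ℝ, 0 < ε →
    (∃ x ∈ Ioo (z - ε) (z + ε) ∩ Ioi 0, 0 < v x) ∧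
    (∃ x ∈ Ioo (z - ε) (z + ε) ∩ Ioi 0, v x < 0)

/-- `v` has exactly `m` sign changes in `(0,∞)`. -/
def ExactSignChanges (v : ℝ → ℝ) (m : ℕ) : Prop :=
  {z | 0 < z ∧ SignChange v z}.Finite ∧ {z | 0 < z ∧ SignChange v z}.ncard = m

/-- Bound state: a C² solution of (E) on `(0,∞)` with `v' 0 = 0` and `v r → 0` as `r → ∞`. -/
def BoundState (n : ℕ) (f : ℝ → ℝ) (v : ℝ → ℝ) : Prop :=
  ContinuousOn v (Ici 0) ∧
    (∀ r : ℝ, 0 < r → DifferentiableAt ℝ v r ∧ DifferentiableAt ℝ (deriv v) r) ∧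
    (∀ r : ℝ, 0 < r → deriv (deriv v) r + ((n : ℝ) - 1) / r * deriv v r + f (v r) = 0) ∧
    deriv v 0 = 0 ∧ Tendsto v atTop (nhds 0)

/-- Solution of the Dirichlet problem on the ball of radius `R`. -/
def DirichletSol (n : ℕ) (f : ℝ → ℝ) (R : ℝ) (v : ℝ → ℝ) : Prop :=
  ContinuousOn v (Icc 0 R) ∧
    (∀ r ∈ Ioo (0:ℝ) R, DifferentiableAt ℝ v r ∧ DifferentiableAt ℝ (deriv v) r) ∧
    (∀ r ∈ Ioo (0:ℝ) R, deriv (deriv v) r + ((n : ℝ) - 1) / r * deriv v r + f (v r) = 0) ∧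
    deriv v 0 = 0 ∧ v R = 0

end
end Paper

open Paper Set Filter MeasureTheory

namespace RadialODE

open Topology

/-! ### Monotonicity and first-zero arguments on the real line -/

theorem le_of_hasDerivAt_nonpos {g g' : ℝ → ℝ} {a b : ℝ} (hab : a ≤ b)
    (hc : ContinuousOn g (Icc a b)) (hd : ∀ x ∈ Ioo a b, HasDerivAt g (g' x) x)
    (hg : ∀ x ∈ Ioo a b, g' x ≤ 0) : g b ≤ g a := by
  have h : AntitoneOn g (Icc a b) := by
    apply antitoneOn_of_deriv_nonpos (convex_Icc a b) hc
    · rw [interior_Icc]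
      exact fun x hx => (hd x hx).differentiableAt.differentiableWithinAt
    · rw [interior_Icc]
      intro x hx
      rw [(hd x hx).deriv]
      exact hg x hx
  exact h (left_mem_Icc.2 hab) (right_mem_Icc.2 hab) hab

theorem lt_of_hasDerivAt_neg {g g' : ℝ → ℝ} {a b : ℝ} (hab : a < b)
    (hc : ContinuousOn g (Icc a b)) (hd : ∀ x ∈ Ioo a b, HasDerivAt g (g' x) x)
    (hg : ∀ x ∈ Ioo a b, g' x < 0) : g b < g a := by
  have h : StrictAntiOn g (Icc a b) := by
    apply strictAntiOn_of_deriv_neg (convex_Icc a b) hc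
    rw [interior_Icc]
    intro x hx
    rw [(hd x hx).deriv]
    exact hg x hx
  exact h (left_mem_Icc.2 hab.le) (right_mem_Icc.2 hab.le) hab

/-- A continuous function positive at `c` is positive on `[a, c]` unless it has a last zero
in `[a, c)`. -/
theorem pos_of_no_last_zero {g : ℝ → ℝ} {a c : ℝ} (hc : ContinuousOn g (Icc a c))
    (hpos : 0 < g c)
    (h : ∀ s ∈ Ico a c, g s = 0 → (∀ t ∈ Ioc s c, 0 < g t) → False) :
    ∀ s ∈ Icc a c, 0 < g s := by
  intro s hs
  by_contra hns
  have hclosed : IsClosed (Icc a c ∩ g ⁻¹' Iic 0) := hc.preimage_isClosed_of_isClosed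
    isClosed_Icc isClosed_Iic
  have hcomp : IsCompact (Icc a c ∩ g ⁻¹' Iic 0) :=
    isCompact_Icc.of_isClosed_subset hclosed inter_subset_left
  obtain ⟨t, ht, htmax⟩ := hcomp.exists_isGreatest ⟨s, hs, not_lt.1 hns⟩
  have htc : t < c := by
    rcases ht.1.2.lt_or_eq with h' | h'
    · exact h'
    · have := ht.2
      simp only [mem_preimage, mem_Iic, h'] at this
      linarith
  have hgt : ∀ u ∈ Ioc t c, 0 < g u := by
    intro u hu
    by_contra hu'
    exact absurd (htmax ⟨⟨ht.1.1.trans hu.1.le, hu.2⟩, not_lt.1 hu'⟩) (not_le.2 hu.1)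
  have hlim : Tendsto g (𝓝[>] t) (𝓝 (g t)) := by
    have h1 : ContinuousWithinAt g (Icc a c) t := hc t ht.1
    have h2 : ContinuousWithinAt g (Ioc t c) t :=
      h1.mono fun u hu => ⟨ht.1.1.trans hu.1.le, hu.2⟩
    rw [← nhdsWithin_Ioc_eq_nhdsGT htc]
    exact h2
  have h0 : 0 ≤ g t := by
    apply ge_of_tendsto hlim
    filter_upwards [Ioc_mem_nhdsGT htc] with u hu using (hgt u hu).le
  exact h t ⟨ht.1.1, htc⟩ (le_antisymm ht.2 h0) hgt

theorem deriv_nonneg_of_pos_right {g : ℝ → ℝ} {g' s c : ℝ} (hsc : s < c)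
    (hd : HasDerivAt g g' s) (h0 : g s = 0) (hpos : ∀ t ∈ Ioc s c, 0 < g t) : 0 ≤ g' := by
  have h1 : Tendsto (slope g s) (𝓝[>] s) (𝓝 g') :=
    (hasDerivAt_iff_tendsto_slope.1 hd).mono_left
      (nhdsWithin_mono _ fun x hx => ne_of_gt hx)
  apply ge_of_tendsto h1
  filter_upwards [Ioc_mem_nhdsGT hsc] with t ht
  rw [slope_def_field, h0, sub_zero]
  exact div_nonneg (hpos t ht).le (sub_nonneg.2 ht.1.le)

/-! ### Branches of solutions parametrized by the value of the solution -/

/-- The properties of a nonlinearity `f` with primitive `F` used in the comparison of branches;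
`d = n - 1`, and `K` is an even primitive of `4 (d - 1) F / f` outside `[-β, β]`. -/
structure Nonlinearity (d : ℝ) (f F K : ℝ → ℝ) (β : ℝ) : Prop where
  one_le_d : 1 ≤ d
  beta_pos : 0 < β
  continuous_f : Continuous f
  odd : ∀ s, f (-s) = -f s
  hasDerivAt_F : ∀ s, HasDerivAt F (f s) s
  F_even : ∀ s, F (-s) = F s
  F_zero : F 0 = 0
  F_beta : F β = 0
  F_nonpos : ∀ s, |s| ≤ β → F s ≤ 0
  F_pos : ∀ s, β < |s| → 0 < F s
  f_pos : ∀ s, β ≤ s → 0 < f s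
  quotient_deriv : ∀ s, β < |s| →
    ∃ g, (d - 1) / 2 ≤ g ∧ HasDerivAt (fun t => F t / f t) g s
  K_even : ∀ s, K (-s) = K s
  K_continuous : Continuous K
  K_deriv : ∀ s, β < |s| → HasDerivAt K (4 * (d - 1) * (F s / f s)) s
  K_mono : MonotoneOn K (Ici β)

/-- A decreasing branch of a radial solution, parametrized by the value `s ∈ (a, M)` of the
solution: `r s` is the radius and `p s = |u'|`. The branch starts at radius `T` with value `M`
and vanishing derivative. -/
structure Branch (d : ℝ) (f F : ℝ → ℝ) (a M T : ℝ) (r p : ℝ → ℝ) : Prop where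
  r_pos : ∀ s ∈ Ioo a M, 0 < r s
  p_pos : ∀ s ∈ Ioo a M, 0 < p s
  hasDerivAt_r : ∀ s ∈ Ioo a M, HasDerivAt r (-(1 / p s)) s
  hasDerivAt_p : ∀ s ∈ Ioo a M, HasDerivAt p (d / r s - f s / p s) s
  energy_pos : ∀ s ∈ Ioo a M, 0 < p s ^ 2 + 2 * F s
  tendsto_r : Tendsto r (𝓝[<] M) (𝓝 T)
  tendsto_p : Tendsto p (𝓝[<] M) (𝓝 0)

/-- The Pohozaev type functional along a branch. -/
noncomputable def pohozaev (f F K r p : ℝ → ℝ) (s : ℝ) : ℝ :=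
  r s ^ 2 * (p s ^ 2 + 2 * F s) - 4 * (F s / f s) * (r s * p s) + K s

/-- The functional `r √(u'² + 2F)` along a branch. -/
noncomputable def radialEnergy (F r p : ℝ → ℝ) (s : ℝ) : ℝ :=
  r s * √(p s ^ 2 + 2 * F s)

variable {d β a M T a₁ a₂ M₁ M₂ T₁ T₂ : ℝ} {f F K r p r₁ p₁ r₂ p₂ : ℝ → ℝ}

theorem Nonlinearity.f_ne_zero (hN : Nonlinearity d f F K β) {s : ℝ} (hs : β ≤ |s|) :
    f s ≠ 0 := by
  rcases abs_cases s with ⟨h, _⟩ | ⟨h, _⟩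
  · exact (hN.f_pos s (h ▸ hs)).ne'
  · have := hN.f_pos (-s) (h ▸ hs)
    rw [hN.odd] at this
    intro h0
    simp [h0] at this

theorem Nonlinearity.continuous_F (hN : Nonlinearity d f F K β) : Continuous F :=
  continuous_iff_continuousAt.2 fun s => (hN.hasDerivAt_F s).continuousAt

theorem Branch.hasDerivAt_mul (hB : Branch d f F a M T r p) {s : ℝ} (hs : s ∈ Ioo a M) :
    HasDerivAt (fun t => r t * p t) (d - 1 - r s * f s / p s) s := by
  refine ((hB.hasDerivAt_r s hs).mul (hB.hasDerivAt_p s hs)).congr_deriv ?_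
  have h1 := (hB.r_pos s hs).ne'
  have h2 := (hB.p_pos s hs).ne'
  field_simp
  ring

theorem Branch.hasDerivAt_energy (hB : Branch d f F a M T r p)
    (hF : ∀ s, HasDerivAt F (f s) s) {s : ℝ} (hs : s ∈ Ioo a M) :
    HasDerivAt (fun t => p t ^ 2 + 2 * F t) (2 * d * p s / r s) s := by
  refine (((hB.hasDerivAt_p s hs).pow 2).add ((hF s).const_mul 2)).congr_deriv ?_
  have h1 := (hB.r_pos s hs).ne'
  have h2 := (hB.p_pos s hs).ne'
  field_simp
  ring

theorem Branch.continuousAt_r (hB : Branch d f F a M T r p) {s : ℝ} (hs : s ∈ Ioo a M) :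
    ContinuousAt r s := (hB.hasDerivAt_r s hs).continuousAt

theorem Branch.continuousAt_p (hB : Branch d f F a M T r p) {s : ℝ} (hs : s ∈ Ioo a M) :
    ContinuousAt p s := (hB.hasDerivAt_p s hs).continuousAt

theorem Branch.hasDerivAt_pohozaev (hB : Branch d f F a M T r p)
    (hN : Nonlinearity d f F K β) {s g : ℝ} (hs : s ∈ Ioo a M) (hβ : β < |s|)
    (hg : HasDerivAt (fun t => F t / f t) g s) :
    HasDerivAt (pohozaev f F K r p) (-4 * (g - (d - 1) / 2) * (r s * p s)) s := by
  have h1 := (hB.r_pos s hs).ne'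
  have h2 := (hB.p_pos s hs).ne'
  have h3 := hN.f_ne_zero hβ.le
  refine (((((hB.hasDerivAt_r s hs).pow 2).mul
    (hB.hasDerivAt_energy hN.hasDerivAt_F hs)).sub
    ((hg.const_mul 4).mul (hB.hasDerivAt_mul hs))).add (hN.K_deriv s hβ)).congr_deriv ?_
  simp only [Pi.pow_apply]
  field_simp
  ring

theorem Branch.continuousAt_pohozaev (hB : Branch d f F a M T r p)
    (hN : Nonlinearity d f F K β) {s : ℝ} (hs : s ∈ Ioo a M) (hβ : β ≤ |s|) :
    ContinuousAt (pohozaev f F K r p) s := by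
  have h1 := hB.continuousAt_r hs
  have h2 := hB.continuousAt_p hs
  have h3 := hN.continuous_F.continuousAt (x := s)
  have h4 := hN.continuous_f.continuousAt (x := s)
  have h5 := hN.K_continuous.continuousAt (x := s)
  have h6 := hN.f_ne_zero hβ
  unfold pohozaev
  fun_prop (disch := assumption)

/-- The limit of the functional at an end of a branch where the derivative vanishes. -/
theorem Nonlinearity.tendsto_pohozaev (hN : Nonlinearity d f F K β) {l : Filter ℝ} {M T : ℝ}
    (hl : l ≤ 𝓝 M) (hM : β ≤ |M|) (hr : Tendsto r l (𝓝 T)) (hp : Tendsto p l (𝓝 0)) :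
    Tendsto (pohozaev f F K r p) l (𝓝 (2 * T ^ 2 * F M + K M)) := by
  have hF : Tendsto F l (𝓝 (F M)) := (hN.continuous_F.tendsto M).mono_left hl
  have hf : Tendsto f l (𝓝 (f M)) := (hN.continuous_f.tendsto M).mono_left hl
  have hK : Tendsto K l (𝓝 (K M)) := (hN.K_continuous.tendsto M).mono_left hl
  have := (((hr.pow 2).mul ((hp.pow 2).add (hF.const_mul 2))).sub
    (((hF.div hf (hN.f_ne_zero hM)).const_mul 4).mul (hr.mul hp))).add hK
  refine (this.congr fun _ => rfl).trans (le_of_eq ?_)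
  congr 1
  ring

/-- Outside `[-β, β]` the functional is nonincreasing along a branch. -/
theorem Branch.pohozaev_le (hB : Branch d f F a M T r p) (hN : Nonlinearity d f F K β)
    {s t : ℝ} (has : a < s) (hst : s ≤ t) (htM : t < M)
    (hβ : ∀ u ∈ Ioo s t, β < |u|) (hs : β ≤ |s|) (ht : β ≤ |t|) :
    pohozaev f F K r p t ≤ pohozaev f F K r p s := by
  have key : ∀ u ∈ Icc s t, β ≤ |u| := by
    intro u hu
    rcases eq_or_lt_of_le hu.1 with h | h
    · exact h ▸ hs
    rcases eq_or_lt_of_le hu.2 with h' | h'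
    · exact h' ▸ ht
    exact (hβ u ⟨h, h'⟩).le
  apply le_of_hasDerivAt_nonpos (g' := deriv (pohozaev f F K r p)) hst
  · intro u hu
    exact (hB.continuousAt_pohozaev hN ⟨has.trans_le hu.1, hu.2.trans_lt htM⟩
      (key u hu)).continuousWithinAt
  · intro u hu
    obtain ⟨g, -, hg⟩ := hN.quotient_deriv u (hβ u hu)
    exact (hB.hasDerivAt_pohozaev hN ⟨has.trans hu.1, hu.2.trans htM⟩ (hβ u hu)
      hg).differentiableAt.hasDerivAt
  · intro u hu
    obtain ⟨g, hg1, hg⟩ := hN.quotient_deriv u (hβ u hu)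
    have hu' : u ∈ Ioo a M := ⟨has.trans hu.1, hu.2.trans htM⟩
    rw [(hB.hasDerivAt_pohozaev hN hu' (hβ u hu) hg).deriv]
    have := mul_nonneg (sub_nonneg.2 hg1) (mul_pos (hB.r_pos u hu') (hB.p_pos u hu')).le
    linarith

/-- The difference of the functionals along two branches is nonincreasing where
`r₁ p₁ ≤ r₂ p₂`. -/
theorem Branch.pohozaev_sub_le (hB₁ : Branch d f F a₁ M₁ T₁ r₁ p₁)
    (hB₂ : Branch d f F a₂ M₂ T₂ r₂ p₂) (hN : Nonlinearity d f F K β)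
    {s t : ℝ} (has₁ : a₁ < s) (has₂ : a₂ < s) (hst : s ≤ t) (htM₁ : t < M₁) (htM₂ : t < M₂)
    (hβ : ∀ u ∈ Ioo s t, β < |u|) (hs : β ≤ |s|) (ht : β ≤ |t|)
    (hx : ∀ u ∈ Ioo s t, r₁ u * p₁ u ≤ r₂ u * p₂ u) :
    pohozaev f F K r₂ p₂ t - pohozaev f F K r₁ p₁ t ≤
      pohozaev f F K r₂ p₂ s - pohozaev f F K r₁ p₁ s := by
  have key : ∀ u ∈ Icc s t, β ≤ |u| := by
    intro u hu
    rcases eq_or_lt_of_le hu.1 with h | h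
    · exact h ▸ hs
    rcases eq_or_lt_of_le hu.2 with h' | h'
    · exact h' ▸ ht
    exact (hβ u ⟨h, h'⟩).le
  have hder : ∀ u ∈ Ioo s t, ∃ g, 0 ≤ g ∧
      HasDerivAt (fun s => pohozaev f F K r₂ p₂ s - pohozaev f F K r₁ p₁ s)
        (-4 * g * (r₂ u * p₂ u - r₁ u * p₁ u)) u := by
    intro u hu
    obtain ⟨g, hg1, hg⟩ := hN.quotient_deriv u (hβ u hu)
    refine ⟨g - (d - 1) / 2, sub_nonneg.2 hg1, ?_⟩
    refine ((hB₂.hasDerivAt_pohozaev hN ⟨has₂.trans hu.1, hu.2.trans htM₂⟩ (hβ u hu) hg).sub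
      (hB₁.hasDerivAt_pohozaev hN ⟨has₁.trans hu.1, hu.2.trans htM₁⟩
        (hβ u hu) hg)).congr_deriv ?_
    ring
  apply le_of_hasDerivAt_nonpos
    (g := fun s => pohozaev f F K r₂ p₂ s - pohozaev f F K r₁ p₁ s) (g' := deriv _) hst
  · intro u hu
    exact ((hB₂.continuousAt_pohozaev hN ⟨has₂.trans_le hu.1, hu.2.trans_lt htM₂⟩
      (key u hu)).sub (hB₁.continuousAt_pohozaev hN ⟨has₁.trans_le hu.1, hu.2.trans_lt htM₁⟩
      (key u hu))).continuousWithinAt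
  · intro u hu
    obtain ⟨g, -, hg⟩ := hder u hu
    exact hg.differentiableAt.hasDerivAt
  · intro u hu
    obtain ⟨g, hg1, hg⟩ := hder u hu
    rw [hg.deriv]
    have := mul_nonneg hg1 (sub_nonneg.2 (hx u hu))
    linarith

theorem abs_inv_sub_inv_le {c x y : ℝ} (hc : 0 < c) (hx : c ≤ x) (hy : c ≤ y) :
    |x⁻¹ - y⁻¹| ≤ (c ^ 2)⁻¹ * |x - y| := by
  have hx0 : 0 < x := hc.trans_le hx
  have hy0 : 0 < y := hc.trans_le hy
  rw [inv_sub_inv hx0.ne' hy0.ne', abs_div, abs_of_pos (mul_pos hx0 hy0), abs_sub_comm,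
    div_eq_inv_mul]
  gcongr
  nlinarith

/-- Local uniqueness for the system satisfied by the radius and the slope as functions of the
value of the solution; only continuity of `f` is needed. -/
theorem eventuallyEq_of_eq_at (hf : Continuous f) {s₀ : ℝ}
    (h₁ : ∀ᶠ s in 𝓝 s₀, HasDerivAt r₁ (-(1 / p₁ s)) s ∧
      HasDerivAt p₁ (d / r₁ s - f s / p₁ s) s)
    (h₂ : ∀ᶠ s in 𝓝 s₀, HasDerivAt r₂ (-(1 / p₂ s)) s ∧
      HasDerivAt p₂ (d / r₂ s - f s / p₂ s) s)
    (hr0 : 0 < r₁ s₀) (hp0 : 0 < p₁ s₀) (hr : r₁ s₀ = r₂ s₀) (hp : p₁ s₀ = p₂ s₀) :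
    ∀ᶠ s in 𝓝 s₀, r₁ s = r₂ s ∧ p₁ s = p₂ s := by
  set cr := r₁ s₀ / 2 with hcr
  set cp := p₁ s₀ / 2 with hcp
  have hcr0 : 0 < cr := by positivity
  have hcp0 : 0 < cp := by positivity
  set B := |f s₀| + 1 with hB
  have hfB : ∀ᶠ s in 𝓝 s₀, |f s| ≤ B := by
    have : ∀ᶠ s in 𝓝 s₀, |f s| < B :=
      (hf.abs.continuousAt (x := s₀)).eventually_lt continuousAt_const (by simp [hB])
    exact this.mono fun s hs => hs.le
  let v : ℝ → ℝ × ℝ → ℝ × ℝ := fun s q => (-(1 / q.2), d / q.1 - f s / q.2)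
  let S : Set (ℝ × ℝ) := {q | cr ≤ q.1 ∧ cp ≤ q.2}
  let L : NNReal := Real.toNNReal ((cp ^ 2)⁻¹ + |d| * (cr ^ 2)⁻¹ + B * (cp ^ 2)⁻¹)
  have hBpos : 0 < B := by positivity
  have hL : (L : ℝ) = (cp ^ 2)⁻¹ + |d| * (cr ^ 2)⁻¹ + B * (cp ^ 2)⁻¹ :=
    Real.coe_toNNReal _ (by positivity)
  have hlip : ∀ᶠ s in 𝓝 s₀, LipschitzOnWith L (v s) S := by
    filter_upwards [hfB] with s hs
    apply LipschitzOnWith.of_dist_le_mul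
    intro q hq q' hq'
    have e1 := abs_inv_sub_inv_le hcr0 hq.1 hq'.1
    have e2 := abs_inv_sub_inv_le hcp0 hq.2 hq'.2
    have n1 : |q.1 - q'.1| ≤ dist q q' := by
      rw [Prod.dist_eq, ← Real.dist_eq]; exact le_max_left _ _
    have n2 : |q.2 - q'.2| ≤ dist q q' := by
      rw [Prod.dist_eq, ← Real.dist_eq]; exact le_max_right _ _
    have k1 : |q.1⁻¹ - q'.1⁻¹| ≤ (cr ^ 2)⁻¹ * dist q q' := e1.trans (by gcongr)
    have k2 : |q.2⁻¹ - q'.2⁻¹| ≤ (cp ^ 2)⁻¹ * dist q q' := e2.trans (by gcongr)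
    have hdist : 0 ≤ dist q q' := dist_nonneg
    rw [hL, Prod.dist_eq, Real.dist_eq, Real.dist_eq]
    apply max_le
    · have : |(v s q).1 - (v s q').1| = |q.2⁻¹ - q'.2⁻¹| := by
        rw [← abs_neg]; congr 1; simp only [v]; ring
      rw [this]
      have : 0 ≤ (|d| * (cr ^ 2)⁻¹ + B * (cp ^ 2)⁻¹) * dist q q' := by positivity
      linarith
    · have : (v s q).2 - (v s q').2 = d * (q.1⁻¹ - q'.1⁻¹) - f s * (q.2⁻¹ - q'.2⁻¹) := by
        simp only [v]; ring
      rw [this]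
      have h3 : |d * (q.1⁻¹ - q'.1⁻¹) - f s * (q.2⁻¹ - q'.2⁻¹)| ≤
          |d| * |q.1⁻¹ - q'.1⁻¹| + |f s| * |q.2⁻¹ - q'.2⁻¹| := by
        rw [← abs_mul, ← abs_mul]; exact abs_sub _ _
      have h4 : |d| * |q.1⁻¹ - q'.1⁻¹| ≤ |d| * ((cr ^ 2)⁻¹ * dist q q') := by gcongr
      have h5 : |f s| * |q.2⁻¹ - q'.2⁻¹| ≤ B * ((cp ^ 2)⁻¹ * dist q q') := by gcongr
      have : 0 ≤ (cp ^ 2)⁻¹ * dist q q' := by positivity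
      linarith
  have hmem : ∀ {ρ π : ℝ → ℝ}, (∀ᶠ s in 𝓝 s₀, HasDerivAt ρ (-(1 / π s)) s ∧
      HasDerivAt π (d / ρ s - f s / π s) s) → ρ s₀ = r₁ s₀ → π s₀ = p₁ s₀ →
      ∀ᶠ s in 𝓝 s₀, HasDerivAt (fun s => (ρ s, π s)) (v s (ρ s, π s)) s ∧
        (ρ s, π s) ∈ S := by
    intro ρ π h e1 e2
    have c1 : ∀ᶠ s in 𝓝 s₀, cr < ρ s :=
      h.self_of_nhds.1.continuousAt.eventually_const_lt (by rw [e1, hcr]; linarith)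
    have c2 : ∀ᶠ s in 𝓝 s₀, cp < π s :=
      h.self_of_nhds.2.continuousAt.eventually_const_lt (by rw [e2, hcp]; linarith)
    filter_upwards [h, c1, c2] with s hs h1 h2
    exact ⟨hs.1.prodMk hs.2, h1.le, h2.le⟩
  have := ODE_solution_unique_of_eventually (v := v) (s := fun _ => S) hlip
    (hmem h₁ rfl rfl) (hmem h₂ hr.symm hp.symm) (by simp [hr, hp])
  filter_upwards [this] with s hs
  simpa using hs

theorem Branch.eventually_eq_of_eq_at (hB₁ : Branch d f F a₁ M₁ T₁ r₁ p₁)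
    (hB₂ : Branch d f F a₂ M₂ T₂ r₂ p₂) (hf : Continuous f) {s : ℝ} (hs₁ : s ∈ Ioo a₁ M₁)
    (hs₂ : s ∈ Ioo a₂ M₂) (hr : r₁ s = r₂ s) (hp : p₁ s = p₂ s) :
    ∀ᶠ t in 𝓝 s, r₁ t = r₂ t ∧ p₁ t = p₂ t := by
  refine eventuallyEq_of_eq_at (d := d) hf ?_ ?_ (hB₁.r_pos s hs₁) (hB₁.p_pos s hs₁) hr hp
  · filter_upwards [isOpen_Ioo.mem_nhds hs₁] with t ht using
      ⟨hB₁.hasDerivAt_r t ht, hB₁.hasDerivAt_p t ht⟩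
  · filter_upwards [isOpen_Ioo.mem_nhds hs₂] with t ht using
      ⟨hB₂.hasDerivAt_r t ht, hB₂.hasDerivAt_p t ht⟩

/-! ### Comparison of two branches -/

/-- At equal slopes, a positive slope difference on the right forces `r₂ ≤ r₁`. -/
theorem Branch.r_le_of_p_eq (hB₁ : Branch d f F a₁ M₁ T₁ r₁ p₁)
    (hB₂ : Branch d f F a₂ M₂ T₂ r₂ p₂) (hd : 0 < d) {s c : ℝ} (hs₁ : s ∈ Ioo a₁ M₁)
    (hs₂ : s ∈ Ioo a₂ M₂) (hsc : s < c) (hp : p₂ s - p₁ s = 0)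
    (hpos : ∀ t ∈ Ioc s c, 0 < p₂ t - p₁ t) : r₂ s ≤ r₁ s := by
  have h := deriv_nonneg_of_pos_right (g := fun t => p₂ t - p₁ t) hsc
    ((hB₂.hasDerivAt_p s hs₂).sub (hB₁.hasDerivAt_p s hs₁)) hp hpos
  rw [sub_eq_zero.1 hp] at h
  have hdiv : d / r₁ s ≤ d / r₂ s := by linarith
  exact (div_le_div_iff_of_pos_left hd (hB₁.r_pos s hs₁) (hB₂.r_pos s hs₂)).1 hdiv

/-- Comparison above `β`. -/
theorem Branch.mul_lt_mul_of_beta_le (hB₁ : Branch d f F a₁ M₁ T₁ r₁ p₁)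
    (hB₂ : Branch d f F a₂ M₂ T₂ r₂ p₂) (hN : Nonlinearity d f F K β)
    (ha₁ : a₁ < β) (ha₂ : a₂ < β) (hM₁ : β < M₁) (hM : M₁ < M₂)
    (hQ : 2 * T₁ ^ 2 * F M₁ + K M₁ ≤ 2 * T₂ ^ 2 * F M₂ + K M₂)
    (hQ' : d = 1 ∨ 2 * T₁ ^ 2 * F M₁ + K M₁ < 2 * T₂ ^ 2 * F M₂ + K M₂) :
    ∀ s ∈ Ico β M₁, r₁ s * p₁ s < r₂ s * p₂ s := by
  have habs : ∀ {t : ℝ}, β < t → β < |t| := fun h => h.trans_le (le_abs_self _)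
  have habs' : ∀ {t : ℝ}, β ≤ t → β ≤ |t| := fun h => h.trans (le_abs_self _)
  have hM₁mem : M₁ ∈ Ioo a₂ M₂ := ⟨ha₂.trans hM₁, hM⟩
  have hM₂ : β < M₂ := hM₁.trans hM
  -- the value of the functional of the second branch at `M₁`
  have hQ₂ : 2 * T₂ ^ 2 * F M₂ + K M₂ ≤ pohozaev f F K r₂ p₂ M₁ := by
    apply le_of_tendsto (hN.tendsto_pohozaev nhdsWithin_le_nhds (habs' hM₂.le)
      hB₂.tendsto_r hB₂.tendsto_p)
    filter_upwards [Ioo_mem_nhdsLT hM] with t ht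
    exact hB₂.pohozaev_le hN hM₁mem.1 ht.1.le ht.2 (fun u hu => habs (hM₁.trans hu.1))
      (habs' hM₁.le) (habs' (hM₁.trans ht.1).le)
  have hdiff : Tendsto (fun t => pohozaev f F K r₂ p₂ t - pohozaev f F K r₁ p₁ t) (𝓝[<] M₁)
      (𝓝 (pohozaev f F K r₂ p₂ M₁ - (2 * T₁ ^ 2 * F M₁ + K M₁))) :=
    ((hB₂.continuousAt_pohozaev hN hM₁mem (habs' hM₁.le)).tendsto.mono_left
      nhdsWithin_le_nhds).sub (hN.tendsto_pohozaev nhdsWithin_le_nhds (habs' hM₁.le)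
        hB₁.tendsto_r hB₁.tendsto_p)
  have hnear : ∀ᶠ t in 𝓝[<] M₁, r₁ t * p₁ t < r₂ t * p₂ t := by
    have l1 : Tendsto (fun t => r₁ t * p₁ t) (𝓝[<] M₁) (𝓝 (T₁ * 0)) :=
      hB₁.tendsto_r.mul hB₁.tendsto_p
    have l2 : Tendsto (fun t => r₂ t * p₂ t) (𝓝[<] M₁) (𝓝 (r₂ M₁ * p₂ M₁)) :=
      ((hB₂.continuousAt_r hM₁mem).mul (hB₂.continuousAt_p hM₁mem)).tendsto.mono_left
        nhdsWithin_le_nhds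
    refine l1.eventually_lt l2 ?_
    rw [mul_zero]
    exact mul_pos (hB₂.r_pos _ hM₁mem) (hB₂.p_pos _ hM₁mem)
  intro s hs
  obtain ⟨c₀, hc₀, hc₀'⟩ := (mem_nhdsLT_iff_exists_Ioo_subset' hs.2).1 hnear
  obtain ⟨c, hc1, hc2⟩ := exists_between (max_lt hs.2 hc₀)
  have hsc : s < c := (le_max_left _ _).trans_lt hc1
  have hcnear : ∀ t ∈ Ico c M₁, r₁ t * p₁ t < r₂ t * p₂ t := fun t ht =>
    hc₀' ⟨((le_max_right _ _).trans_lt hc1).trans_le ht.1, ht.2⟩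
  have mem₁ : ∀ t ∈ Ico β M₁, t ∈ Ioo a₁ M₁ := fun t ht => ⟨ha₁.trans_le ht.1, ht.2⟩
  have mem₂ : ∀ t ∈ Ico β M₁, t ∈ Ioo a₂ M₂ := fun t ht => ⟨ha₂.trans_le ht.1, ht.2.trans hM⟩
  have key := pos_of_no_last_zero (g := fun t => r₂ t * p₂ t - r₁ t * p₁ t) (a := β) (c := c)
    ?_ (sub_pos.2 (hcnear c ⟨le_rfl, hc2⟩)) ?_ s ⟨hs.1, hsc.le⟩
  · exact sub_pos.1 key
  · intro t ht
    have ht' : t ∈ Ico β M₁ := ⟨ht.1, ht.2.trans_lt hc2⟩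
    exact (((hB₂.hasDerivAt_mul (mem₂ t ht')).continuousAt).sub
      ((hB₁.hasDerivAt_mul (mem₁ t ht')).continuousAt)).continuousWithinAt
  · intro t ht h0 hpos
    have ht' : t ∈ Ico β M₁ := ⟨ht.1, ht.2.trans hc2⟩
    have m1 := mem₁ t ht'
    have m2 := mem₂ t ht'
    have hpos' : ∀ u ∈ Ioo t M₁, r₁ u * p₁ u < r₂ u * p₂ u := by
      intro u hu
      rcases le_or_gt u c with h | h
      · exact sub_pos.1 (hpos u ⟨hu.1, h⟩)
      · exact hcnear u ⟨h.le, hu.2⟩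
    have hDanti : ∀ w ∈ Ico t M₁, ∀ u ∈ Ico w M₁,
        pohozaev f F K r₂ p₂ u - pohozaev f F K r₁ p₁ u ≤
          pohozaev f F K r₂ p₂ w - pohozaev f F K r₁ p₁ w := by
      intro w hw u hu
      have hβw : β ≤ w := ht.1.trans hw.1
      exact hB₁.pohozaev_sub_le hB₂ hN (m1.1.trans_le hw.1) (m2.1.trans_le hw.1) hu.1 hu.2
        (hu.2.trans hM) (fun y hy => habs (hβw.trans_lt hy.1)) (habs' hβw)
        (habs' (hβw.trans hu.1))
        (fun y hy => (hpos' y ⟨hw.1.trans_lt hy.1, hy.2.trans hu.2⟩).le)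
    have hDlim : ∀ w ∈ Ico t M₁,
        pohozaev f F K r₂ p₂ M₁ - (2 * T₁ ^ 2 * F M₁ + K M₁) ≤
          pohozaev f F K r₂ p₂ w - pohozaev f F K r₁ p₁ w := by
      intro w hw
      refine le_of_tendsto hdiff ?_
      filter_upwards [Ioo_mem_nhdsLT hw.2] with u hu using hDanti w hw u ⟨hu.1.le, hu.2⟩
    have hD0 : ∀ w ∈ Ico t M₁, 0 ≤ pohozaev f F K r₂ p₂ w - pohozaev f F K r₁ p₁ w :=
      fun w hw => le_trans (sub_nonneg.2 (hQ.trans hQ₂)) (hDlim w hw)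
    have hD := hD0 t ⟨le_rfl, ht'.2⟩
    have hder := deriv_nonneg_of_pos_right ht.2
      ((hB₂.hasDerivAt_mul m2).sub (hB₁.hasDerivAt_mul m1)) h0 hpos
    have h0' : r₂ t * p₂ t = r₁ t * p₁ t := sub_eq_zero.1 h0
    have hr1 := hB₁.r_pos t m1
    have hr2 := hB₂.r_pos t m2
    have hp1 := hB₁.p_pos t m1
    have hp2 := hB₂.p_pos t m2
    have hft := hN.f_pos t ht.1
    have hle : r₂ t ≤ r₁ t := by
      have e1 : r₂ t * f t / p₂ t = r₂ t ^ 2 * (f t / (r₁ t * p₁ t)) := by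
        rw [← h0']; field_simp
      have e2 : r₁ t * f t / p₁ t = r₁ t ^ 2 * (f t / (r₁ t * p₁ t)) := by
        field_simp
      rw [e1, e2] at hder
      have : r₂ t ^ 2 * (f t / (r₁ t * p₁ t)) ≤ r₁ t ^ 2 * (f t / (r₁ t * p₁ t)) := by
        linarith
      have := le_of_mul_le_mul_right this (by positivity)
      exact (pow_le_pow_iff_left₀ hr2.le hr1.le two_ne_zero).1 this
    have hge : r₁ t = r₂ t := by
      rcases ht.1.lt_or_eq with hβt | hβt
      · have hFt := hN.F_pos t (habs hβt)
        unfold pohozaev at hD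
        rw [h0'] at hD
        have e : r₂ t ^ 2 * p₂ t ^ 2 = r₁ t ^ 2 * p₁ t ^ 2 := by
          rw [← mul_pow, ← mul_pow, h0']
        have : r₁ t ^ 2 * F t ≤ r₂ t ^ 2 * F t := by nlinarith
        have := le_of_mul_le_mul_right this hFt
        exact le_antisymm ((pow_le_pow_iff_left₀ hr1.le hr2.le two_ne_zero).1 this) hle
      · exfalso
        have hDt : pohozaev f F K r₂ p₂ t - pohozaev f F K r₁ p₁ t = 0 := by
          have e : r₂ t ^ 2 * p₂ t ^ 2 = r₁ t ^ 2 * p₁ t ^ 2 := by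
            rw [← mul_pow, ← mul_pow, h0']
          have hF0 : F t = 0 := hβt ▸ hN.F_beta
          simp only [pohozaev, hF0]
          linear_combination e
        rcases hQ' with hd1 | hlt
        · have hg0 : ∀ u ∈ Ioo t M₁, HasDerivAt (fun y => F y / f y) 0 u := by
            intro u hu
            have hβu : β < |u| := habs (ht.1.trans_lt hu.1)
            obtain ⟨g, -, hg⟩ := hN.quotient_deriv u hβu
            have hu' : u ∈ Ico β M₁ := ⟨ht.1.trans hu.1.le, hu.2⟩
            have h1 := (hB₂.hasDerivAt_pohozaev hN (mem₂ u hu') hβu hg).sub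
              (hB₁.hasDerivAt_pohozaev hN (mem₁ u hu') hβu hg)
            have h2 : HasDerivAt (pohozaev f F K r₂ p₂ - pohozaev f F K r₁ p₁) 0 u := by
              refine (hasDerivAt_const u (0 : ℝ)).congr_of_eventuallyEq ?_
              filter_upwards [isOpen_Ioo.mem_nhds hu] with w hw
              refine le_antisymm ?_ (hD0 w ⟨hw.1.le, hw.2⟩)
              exact (hDanti t ⟨le_rfl, ht'.2⟩ w ⟨hw.1.le, hw.2⟩).trans hDt.le
            have h3 := h1.unique h2
            have h4 : g * (r₂ u * p₂ u - r₁ u * p₁ u) = 0 := by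
              rw [hd1] at h3
              linarith
            rcases mul_eq_zero.1 h4 with h5 | h5
            · exact h5 ▸ hg
            · exact absurd h5 (sub_pos.2 (hpos' u hu)).ne'
          obtain ⟨u, hu1, hu2⟩ := exists_between ht'.2
          have hle' := le_of_hasDerivAt_nonpos (g := fun y => F y / f y) (g' := fun _ => 0)
            hu1.le (fun y hy => ContinuousAt.continuousWithinAt
              (hN.continuous_F.continuousAt.div hN.continuous_f.continuousAt
                (hN.f_ne_zero (habs' (ht.1.trans hy.1)))))
            (fun y hy => hg0 y ⟨hy.1, hy.2.trans hu2⟩) (fun y _ => le_rfl)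
          have hβu : β < u := ht.1.trans_lt hu1
          have hF0 : F t = 0 := hβt ▸ hN.F_beta
          have := div_pos (hN.F_pos u (habs hβu)) (hN.f_pos u hβu.le)
          simp only [hF0, zero_div] at hle'
          linarith
        · have := hDlim t ⟨le_rfl, ht'.2⟩
          linarith
    have hpe : p₁ t = p₂ t := by
      rw [← hge] at h0'
      exact (mul_left_cancel₀ hr1.ne' h0').symm
    obtain ⟨u, hu, hut⟩ := (((hB₁.eventually_eq_of_eq_at hB₂ hN.continuous_f m1 m2 hge
      hpe).filter_mono nhdsWithin_le_nhds).and (Ioo_mem_nhdsGT ht'.2)).exists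
    have := hpos' u hut
    rw [hu.1, hu.2] at this
    exact lt_irrefl _ this

/-- Comparison of slopes above `β`. -/
theorem Branch.p_lt_p_of_beta_le (hB₁ : Branch d f F a₁ M₁ T₁ r₁ p₁)
    (hB₂ : Branch d f F a₂ M₂ T₂ r₂ p₂) (hd : 0 < d)
    (ha₁ : a₁ < β) (ha₂ : a₂ < β) (hM₁ : β < M₁) (hM : M₁ < M₂)
    (hx : ∀ s ∈ Ico β M₁, r₁ s * p₁ s < r₂ s * p₂ s) :
    ∀ s ∈ Ico β M₁, p₁ s < p₂ s := by
  have hM₁mem : M₁ ∈ Ioo a₂ M₂ := ⟨ha₂.trans hM₁, hM⟩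
  have hnear : ∀ᶠ t in 𝓝[<] M₁, p₁ t < p₂ t :=
    hB₁.tendsto_p.eventually_lt ((hB₂.continuousAt_p hM₁mem).tendsto.mono_left
      nhdsWithin_le_nhds) (hB₂.p_pos _ hM₁mem)
  intro s hs
  obtain ⟨c, hpc, hc⟩ := (hnear.and (Ioo_mem_nhdsLT hs.2)).exists
  have mem₁ : ∀ t ∈ Ico β M₁, t ∈ Ioo a₁ M₁ := fun t ht => ⟨ha₁.trans_le ht.1, ht.2⟩
  have mem₂ : ∀ t ∈ Ico β M₁, t ∈ Ioo a₂ M₂ := fun t ht => ⟨ha₂.trans_le ht.1, ht.2.trans hM⟩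
  refine sub_pos.1 (pos_of_no_last_zero (g := fun t => p₂ t - p₁ t) (a := β) (c := c)
    ?_ (sub_pos.2 hpc) ?_ s ⟨hs.1, hc.1.le⟩)
  · intro t ht
    have ht' : t ∈ Ico β M₁ := ⟨ht.1, ht.2.trans_lt hc.2⟩
    exact ((hB₂.continuousAt_p (mem₂ t ht')).sub
      (hB₁.continuousAt_p (mem₁ t ht'))).continuousWithinAt
  · intro t ht h0 hpos
    have ht' : t ∈ Ico β M₁ := ⟨ht.1, ht.2.trans hc.2⟩
    have hle := hB₁.r_le_of_p_eq hB₂ hd (mem₁ t ht') (mem₂ t ht') ht.2 h0 hpos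
    have h := hx t ht'
    rw [sub_eq_zero.1 h0] at h
    exact absurd hle (not_le.2 (lt_of_mul_lt_mul_right h (hB₁.p_pos t (mem₁ t ht')).le))

theorem Branch.hasDerivAt_radialEnergy (hB : Branch d f F a M T r p)
    (hF : ∀ s, HasDerivAt F (f s) s) {s : ℝ} (hs : s ∈ Ioo a M) :
    HasDerivAt (radialEnergy F r p)
      (((d - 1) * p s ^ 2 - 2 * F s) / (p s * √(p s ^ 2 + 2 * F s))) s := by
  have hE := hB.energy_pos s hs
  have h1 := (hB.r_pos s hs).ne'
  have h2 := (hB.p_pos s hs).ne'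
  have h3 := (Real.sqrt_pos.2 hE).ne'
  refine ((hB.hasDerivAt_r s hs).mul
    ((hB.hasDerivAt_energy hF hs).sqrt hE.ne')).congr_deriv ?_
  have h4 : √(p s ^ 2 + 2 * F s) ^ 2 = p s ^ 2 + 2 * F s := Real.sq_sqrt hE.le
  field_simp
  rw [h4]
  ring

/-- The derivative of `radialEnergy` is a nonincreasing function of the slope when `F ≤ 0`. -/
theorem radialEnergy_slope_le {c p q : ℝ} (hd : 1 ≤ d) (hc : c ≤ 0) (hp : 0 < p) (hpq : p ≤ q)
    (hE : 0 < p ^ 2 + 2 * c) :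
    ((d - 1) * q ^ 2 - 2 * c) / (q * √(q ^ 2 + 2 * c)) ≤
      ((d - 1) * p ^ 2 - 2 * c) / (p * √(p ^ 2 + 2 * c)) := by
  have hq : 0 < q := hp.trans_le hpq
  have hsq : p ^ 2 ≤ q ^ 2 := by gcongr
  have hE' : 0 < q ^ 2 + 2 * c := by linarith
  have s1 := Real.sqrt_pos.2 hE
  have s2 := Real.sqrt_pos.2 hE'
  have split : ∀ {x : ℝ}, 0 < x → 0 < √(x ^ 2 + 2 * c) →
      ((d - 1) * x ^ 2 - 2 * c) / (x * √(x ^ 2 + 2 * c)) =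
        (d - 1) * (x / √(x ^ 2 + 2 * c)) + (-2 * c) / (x * √(x ^ 2 + 2 * c)) := by
    intro x hx hs
    field_simp
    ring
  rw [split hq s2, split hp s1]
  apply add_le_add
  · apply mul_le_mul_of_nonneg_left _ (by linarith)
    rw [div_le_div_iff₀ s2 s1]
    have e1 : q * √(p ^ 2 + 2 * c) = √(q ^ 2 * (p ^ 2 + 2 * c)) := by
      rw [Real.sqrt_mul (sq_nonneg q), Real.sqrt_sq hq.le]
    have e2 : p * √(q ^ 2 + 2 * c) = √(p ^ 2 * (q ^ 2 + 2 * c)) := by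
      rw [Real.sqrt_mul (sq_nonneg p), Real.sqrt_sq hp.le]
    rw [e1, e2]
    apply Real.sqrt_le_sqrt
    nlinarith
  · apply div_le_div_of_nonneg_left (by linarith) (by positivity)
    have := Real.sqrt_le_sqrt (show p ^ 2 + 2 * c ≤ q ^ 2 + 2 * c by linarith)
    gcongr

/-- On `[-β, β]` the difference of the radial energies is nonincreasing where `p₁ ≤ p₂`. -/
theorem Branch.radialEnergy_sub_le (hB₁ : Branch d f F a₁ M₁ T₁ r₁ p₁)
    (hB₂ : Branch d f F a₂ M₂ T₂ r₂ p₂) (hN : Nonlinearity d f F K β)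
    {s t : ℝ} (has₁ : a₁ < s) (has₂ : a₂ < s) (hst : s ≤ t) (htM₁ : t < M₁) (htM₂ : t < M₂)
    (hs : -β ≤ s) (ht : t ≤ β) (hp : ∀ u ∈ Ioo s t, p₁ u ≤ p₂ u) :
    radialEnergy F r₂ p₂ t - radialEnergy F r₁ p₁ t ≤
      radialEnergy F r₂ p₂ s - radialEnergy F r₁ p₁ s := by
  have m1 : ∀ u ∈ Icc s t, u ∈ Ioo a₁ M₁ := fun u hu =>
    ⟨has₁.trans_le hu.1, hu.2.trans_lt htM₁⟩
  have m2 : ∀ u ∈ Icc s t, u ∈ Ioo a₂ M₂ := fun u hu =>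
    ⟨has₂.trans_le hu.1, hu.2.trans_lt htM₂⟩
  have hder := fun u hu => (hB₂.hasDerivAt_radialEnergy hN.hasDerivAt_F (m2 u hu)).sub
    (hB₁.hasDerivAt_radialEnergy hN.hasDerivAt_F (m1 u hu))
  refine le_of_hasDerivAt_nonpos (g := radialEnergy F r₂ p₂ - radialEnergy F r₁ p₁) hst
    (fun u hu => (hder u hu).continuousAt.continuousWithinAt)
    (fun u hu => hder u (Ioo_subset_Icc_self hu)) ?_
  intro u hu
  have hu' := Ioo_subset_Icc_self hu
  exact sub_nonpos.2 (radialEnergy_slope_le hN.one_le_d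
    (hN.F_nonpos u (abs_le.2 ⟨hs.trans hu'.1, hu'.2.trans ht⟩))
    (hB₁.p_pos u (m1 u hu')) (hp u hu) (hB₁.energy_pos u (m1 u hu')))

theorem Branch.radialEnergy_beta (hB : Branch d f F a M T r p) {s : ℝ} (hs : s ∈ Ioo a M)
    (h0 : F s = 0) : radialEnergy F r p s = r s * p s := by
  rw [radialEnergy, h0, mul_zero, add_zero, Real.sqrt_sq (hB.p_pos s hs).le]

/-- Comparison of slopes on `[-β, β]`. -/
theorem Branch.p_lt_p_of_le_beta (hB₁ : Branch d f F a₁ M₁ T₁ r₁ p₁)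
    (hB₂ : Branch d f F a₂ M₂ T₂ r₂ p₂) (hN : Nonlinearity d f F K β)
    (hM₁ : β < M₁) (hM₂ : β < M₂) (hp : p₁ β < p₂ β)
    (hx : r₁ β * p₁ β < r₂ β * p₂ β) {s : ℝ} (has₁ : a₁ < s) (has₂ : a₂ < s)
    (hs : s ∈ Icc (-β) β) : p₁ s < p₂ s := by
  have m1 : ∀ u ∈ Icc s β, u ∈ Ioo a₁ M₁ := fun u hu =>
    ⟨has₁.trans_le hu.1, hu.2.trans_lt hM₁⟩
  have m2 : ∀ u ∈ Icc s β, u ∈ Ioo a₂ M₂ := fun u hu =>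
    ⟨has₂.trans_le hu.1, hu.2.trans_lt hM₂⟩
  refine sub_pos.1 (pos_of_no_last_zero (g := fun t => p₂ t - p₁ t) (a := s) (c := β)
    ?_ (sub_pos.2 hp) ?_ s ⟨le_rfl, hs.2⟩)
  · intro t ht
    exact ((hB₂.continuousAt_p (m2 t ht)).sub
      (hB₁.continuousAt_p (m1 t ht))).continuousWithinAt
  · intro t ht h0 hpos
    have ht' := Ico_subset_Icc_self ht
    have hle := hB₁.r_le_of_p_eq hB₂ (by linarith [hN.one_le_d]) (m1 t ht') (m2 t ht')
      ht.2 h0 hpos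
    have hW := hB₁.radialEnergy_sub_le hB₂ hN (m1 t ht').1 (m2 t ht').1 ht.2.le hM₁ hM₂
      (hs.1.trans ht.1) le_rfl (fun u hu => (sub_pos.1 (hpos u ⟨hu.1, hu.2.le⟩)).le)
    have hβ : β ∈ Icc s β := ⟨hs.2, le_rfl⟩
    rw [hB₁.radialEnergy_beta (m1 β hβ) hN.F_beta, hB₂.radialEnergy_beta (m2 β hβ) hN.F_beta]
      at hW
    have h : radialEnergy F r₁ p₁ t < radialEnergy F r₂ p₂ t := by linarith
    rw [radialEnergy, radialEnergy, sub_eq_zero.1 h0] at h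
    exact absurd hle (not_le.2 (lt_of_mul_lt_mul_right h (Real.sqrt_nonneg _)))

/-- Comparison below `-β`. -/
theorem Branch.lt_of_le_neg_beta (hB₁ : Branch d f F a₁ M₁ T₁ r₁ p₁)
    (hB₂ : Branch d f F a₂ M₂ T₂ r₂ p₂) (hN : Nonlinearity d f F K β)
    (hM₁ : β < M₁) (hM₂ : β < M₂) (hp : p₁ (-β) < p₂ (-β))
    (hx : r₁ (-β) * p₁ (-β) < r₂ (-β) * p₂ (-β)) {s : ℝ} (has₁ : a₁ < s) (has₂ : a₂ < s)
    (hs : s ≤ -β) :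
    p₁ s < p₂ s ∧ r₁ s * p₁ s < r₂ s * p₂ s ∧
      r₂ (-β) ^ 2 * p₂ (-β) ^ 2 - r₁ (-β) ^ 2 * p₁ (-β) ^ 2 ≤
        pohozaev f F K r₂ p₂ s - pohozaev f F K r₁ p₁ s := by
  have hβ0 := hN.beta_pos
  have m1 : ∀ u ∈ Icc s (-β), u ∈ Ioo a₁ M₁ := fun u hu =>
    ⟨has₁.trans_le hu.1, hu.2.trans_lt (by linarith)⟩
  have m2 : ∀ u ∈ Icc s (-β), u ∈ Ioo a₂ M₂ := fun u hu =>
    ⟨has₂.trans_le hu.1, hu.2.trans_lt (by linarith)⟩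
  have hβmem : -β ∈ Icc s (-β) := ⟨hs, le_rfl⟩
  have habs : ∀ u, u < -β → β < |u| := fun u hu => lt_abs.2 (Or.inr (by linarith))
  have habs' : ∀ u, u ≤ -β → β ≤ |u| := fun u hu => le_abs.2 (Or.inr (by linarith))
  have hF0 : F (-β) = 0 := by rw [hN.F_even, hN.F_beta]
  have hQ : ∀ t ∈ Icc s (-β), (∀ u ∈ Ioc t (-β), r₁ u * p₁ u < r₂ u * p₂ u) →
      r₂ (-β) ^ 2 * p₂ (-β) ^ 2 - r₁ (-β) ^ 2 * p₁ (-β) ^ 2 ≤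
        pohozaev f F K r₂ p₂ t - pohozaev f F K r₁ p₁ t := by
    intro t ht hxt
    have h := hB₁.pohozaev_sub_le hB₂ hN (m1 t ht).1 (m2 t ht).1 ht.2 (m1 _ hβmem).2
      (m2 _ hβmem).2 (fun u hu => habs u hu.2) (habs' t ht.2) (habs' _ le_rfl)
      (fun u hu => (hxt u ⟨hu.1, hu.2.le⟩).le)
    refine le_trans (le_of_eq ?_) h
    simp only [pohozaev, hF0, zero_div]
    ring
  have hpos0 : 0 < r₂ (-β) ^ 2 * p₂ (-β) ^ 2 - r₁ (-β) ^ 2 * p₁ (-β) ^ 2 := by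
    rw [← mul_pow, ← mul_pow]
    have := mul_pos (hB₁.r_pos _ (m1 _ hβmem)) (hB₁.p_pos _ (m1 _ hβmem))
    exact sub_pos.2 (by gcongr)
  have key := pos_of_no_last_zero
    (g := fun t => min (p₂ t - p₁ t) (r₂ t * p₂ t - r₁ t * p₁ t)) (a := s) (c := -β)
    ?_ (lt_min (sub_pos.2 hp) (sub_pos.2 hx)) ?_
  · have hks := lt_min_iff.1 (key s ⟨le_rfl, hs⟩)
    exact ⟨sub_pos.1 hks.1, sub_pos.1 hks.2, hQ s ⟨le_rfl, hs⟩ fun u hu =>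
      sub_pos.1 (lt_min_iff.1 (key u (Ioc_subset_Icc_self hu))).2⟩
  · intro t ht
    exact ContinuousAt.continuousWithinAt (((hB₂.continuousAt_p (m2 t ht)).sub
      (hB₁.continuousAt_p (m1 t ht))).min ((hB₂.hasDerivAt_mul (m2 t ht)).continuousAt.sub
      (hB₁.hasDerivAt_mul (m1 t ht)).continuousAt))
  · intro t ht h0 hpos
    have ht' := Ico_subset_Icc_self ht
    have hr1 := hB₁.r_pos t (m1 t ht')
    have hr2 := hB₂.r_pos t (m2 t ht')
    have hp1 := hB₁.p_pos t (m1 t ht')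
    have hp2 := hB₂.p_pos t (m2 t ht')
    have hD := hpos0.trans_le (hQ t ht' fun u hu => sub_pos.1 (lt_min_iff.1 (hpos u hu)).2)
    have hxle : r₁ t * p₁ t ≤ r₂ t * p₂ t :=
      sub_nonneg.1 (h0 ▸ min_le_right (p₂ t - p₁ t) (r₂ t * p₂ t - r₁ t * p₁ t))
    have hple : p₁ t ≤ p₂ t :=
      sub_nonneg.1 (h0 ▸ min_le_left (p₂ t - p₁ t) (r₂ t * p₂ t - r₁ t * p₁ t))
    by_cases hxe : r₂ t * p₂ t = r₁ t * p₁ t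
    · have hFt := hN.F_pos t (habs t ht.2)
      unfold pohozaev at hD
      rw [hxe] at hD
      have e : r₂ t ^ 2 * p₂ t ^ 2 = r₁ t ^ 2 * p₁ t ^ 2 := by
        rw [← mul_pow, ← mul_pow, hxe]
      have h1 : r₁ t ^ 2 * F t < r₂ t ^ 2 * F t := by nlinarith
      have h2 := (pow_lt_pow_iff_left₀ hr1.le hr2.le two_ne_zero).1
        (lt_of_mul_lt_mul_right h1 hFt.le)
      have h3 : r₁ t * p₁ t < r₂ t * p₂ t := mul_lt_mul h2 hple hp1 hr2.le
      exact h3.ne' hxe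
    · have hxlt : r₁ t * p₁ t < r₂ t * p₂ t := lt_of_le_of_ne hxle (Ne.symm hxe)
      have hpe : p₂ t - p₁ t = 0 := by
        rcases min_choice (p₂ t - p₁ t) (r₂ t * p₂ t - r₁ t * p₁ t) with h | h
        · exact h ▸ h0
        · exact absurd (h ▸ h0) (sub_pos.2 hxlt).ne'
      have hle := hB₁.r_le_of_p_eq hB₂ (by linarith [hN.one_le_d]) (m1 t ht') (m2 t ht')
        ht.2 hpe (fun u hu => (lt_min_iff.1 (hpos u hu)).1)
      rw [sub_eq_zero.1 hpe] at hxlt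
      exact absurd hle (not_le.2 (lt_of_mul_lt_mul_right hxlt hp1.le))

/-- If both branches end at the value `0`, then `r₂ p₂` stays away from zero there. -/
theorem Branch.exists_le_mul_of_comparison (hB₁ : Branch d f F 0 M₁ T₁ r₁ p₁)
    (hB₂ : Branch d f F 0 M₂ T₂ r₂ p₂) (hN : Nonlinearity d f F K β)
    (hM₁ : β < M₁) (hM : M₁ < M₂)
    (hQ : 2 * T₁ ^ 2 * F M₁ + K M₁ ≤ 2 * T₂ ^ 2 * F M₂ + K M₂)
    (hQ' : d = 1 ∨ 2 * T₁ ^ 2 * F M₁ + K M₁ < 2 * T₂ ^ 2 * F M₂ + K M₂) :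
    ∃ δ > 0, ∀ s ∈ Ioo 0 β, δ ≤ r₂ s * p₂ s := by
  have hβ0 := hN.beta_pos
  have hM₂ := hM₁.trans hM
  have hxx := hB₁.mul_lt_mul_of_beta_le hB₂ hN hβ0 hβ0 hM₁ hM hQ hQ'
  have hpp := hB₁.p_lt_p_of_beta_le hB₂ (by linarith [hN.one_le_d]) hβ0 hβ0 hM₁ hM hxx
  have hβm : β ∈ Ico β M₁ := ⟨le_rfl, hM₁⟩
  refine ⟨r₂ β * p₂ β - r₁ β * p₁ β, sub_pos.2 (hxx β hβm), fun s hs => ?_⟩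
  have h := hB₁.radialEnergy_sub_le hB₂ hN hs.1 hs.1 hs.2.le hM₁ hM₂ (by linarith [hs.1]) le_rfl
    fun u hu => (hB₁.p_lt_p_of_le_beta hB₂ hN hM₁ hM₂ (hpp β hβm) (hxx β hβm)
      (hs.1.trans hu.1) (hs.1.trans hu.1) ⟨by linarith [hs.1, hu.1], hu.2.le⟩).le
  rw [hB₁.radialEnergy_beta ⟨hβ0, hM₁⟩ hN.F_beta,
    hB₂.radialEnergy_beta ⟨hβ0, hM₂⟩ hN.F_beta] at h
  have m1 : s ∈ Ioo 0 M₁ := ⟨hs.1, hs.2.trans hM₁⟩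
  have m2 : s ∈ Ioo 0 M₂ := ⟨hs.1, hs.2.trans hM₂⟩
  have h1 : 0 ≤ radialEnergy F r₁ p₁ s :=
    mul_nonneg (hB₁.r_pos s m1).le (Real.sqrt_nonneg _)
  have h2 : radialEnergy F r₂ p₂ s ≤ r₂ s * p₂ s := by
    refine mul_le_mul_of_nonneg_left ?_ (hB₂.r_pos s m2).le
    refine Real.sqrt_le_iff.2 ⟨(hB₂.p_pos s m2).le, ?_⟩
    have := hN.F_nonpos s (by rw [abs_of_pos hs.1]; exact hs.2.le)
    linarith
  linarith

/-- Comparison of the ends of two branches reaching values below `-β`. -/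
theorem Branch.end_comparison (hB₁ : Branch d f F a₁ M₁ T₁ r₁ p₁)
    (hB₂ : Branch d f F a₂ M₂ T₂ r₂ p₂) (hN : Nonlinearity d f F K β)
    (hM₁ : β < M₁) (hM : M₁ < M₂)
    (hQ : 2 * T₁ ^ 2 * F M₁ + K M₁ ≤ 2 * T₂ ^ 2 * F M₂ + K M₂)
    (hQ' : d = 1 ∨ 2 * T₁ ^ 2 * F M₁ + K M₁ < 2 * T₂ ^ 2 * F M₂ + K M₂)
    (ha₁ : a₁ < -β) (ha₂ : a₂ < -β) {T₁' T₂' : ℝ}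
    (hr₁ : Tendsto r₁ (𝓝[>] a₁) (𝓝 T₁')) (hp₁ : Tendsto p₁ (𝓝[>] a₁) (𝓝 0))
    (hr₂ : Tendsto r₂ (𝓝[>] a₂) (𝓝 T₂')) (hp₂ : Tendsto p₂ (𝓝[>] a₂) (𝓝 0)) :
    a₂ < a₁ ∧ 2 * T₁' ^ 2 * F a₁ + K a₁ < 2 * T₂' ^ 2 * F a₂ + K a₂ := by
  have hβ0 := hN.beta_pos
  have hd : 0 < d := by linarith [hN.one_le_d]
  have hM₂ := hM₁.trans hM
  have hxx := hB₁.mul_lt_mul_of_beta_le hB₂ hN (by linarith) (by linarith) hM₁ hM hQ hQ'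
  have hpp := hB₁.p_lt_p_of_beta_le hB₂ hd (by linarith) (by linarith) hM₁ hM hxx
  have hβm : β ∈ Ico β M₁ := ⟨le_rfl, hM₁⟩
  have hmid : ∀ u ∈ Icc (-β) β, p₁ u < p₂ u := fun u hu =>
    hB₁.p_lt_p_of_le_beta hB₂ hN hM₁ hM₂ (hpp β hβm) (hxx β hβm)
      (ha₁.trans_le hu.1) (ha₂.trans_le hu.1) hu
  have hp0 : p₁ (-β) < p₂ (-β) := hmid _ ⟨le_rfl, by linarith⟩
  have n1 : -β ∈ Ioo a₁ M₁ := ⟨ha₁, by linarith⟩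
  have n2 : -β ∈ Ioo a₂ M₂ := ⟨ha₂, by linarith⟩
  have hF0 : F (-β) = 0 := by rw [hN.F_even, hN.F_beta]
  have hx0 : r₁ (-β) * p₁ (-β) < r₂ (-β) * p₂ (-β) := by
    have h := hB₁.radialEnergy_sub_le hB₂ hN ha₁ ha₂ (by linarith) hM₁ hM₂ le_rfl le_rfl
      fun u hu => (hmid u (Ioo_subset_Icc_self hu)).le
    rw [hB₁.radialEnergy_beta ⟨by linarith, hM₁⟩ hN.F_beta,
      hB₂.radialEnergy_beta ⟨by linarith, hM₂⟩ hN.F_beta,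
      hB₁.radialEnergy_beta n1 hF0, hB₂.radialEnergy_beta n2 hF0] at h
    linarith [hxx β hβm]
  set c := r₂ (-β) ^ 2 * p₂ (-β) ^ 2 - r₁ (-β) ^ 2 * p₁ (-β) ^ 2 with hc
  have hc0 : 0 < c := by
    rw [hc, ← mul_pow, ← mul_pow]
    have := mul_pos (hB₁.r_pos _ n1) (hB₁.p_pos _ n1)
    exact sub_pos.2 (by gcongr)
  have low : ∀ s, a₁ < s → a₂ < s → s ≤ -β → p₁ s < p₂ s ∧
      c ≤ pohozaev f F K r₂ p₂ s - pohozaev f F K r₁ p₁ s := fun s h1 h2 h3 =>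
    have h := hB₁.lt_of_le_neg_beta hB₂ hN hM₁ hM₂ hp0 hx0 h1 h2 h3
    ⟨h.1, h.2.2⟩
  have habs : ∀ u, u < -β → β < |u| := fun u hu => lt_abs.2 (Or.inr (by linarith))
  have hP₁ := hN.tendsto_pohozaev nhdsWithin_le_nhds (habs _ ha₁).le hr₁ hp₁
  have hP₂ := hN.tendsto_pohozaev nhdsWithin_le_nhds (habs _ ha₂).le hr₂ hp₂
  have hT₁ : 0 ≤ T₁' := ge_of_tendsto hr₁ (by
    filter_upwards [Ioo_mem_nhdsGT n1.1] with s hs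
    exact (hB₁.r_pos s ⟨hs.1, hs.2.trans n1.2⟩).le)
  have hT₂ : 0 ≤ T₂' := ge_of_tendsto hr₂ (by
    filter_upwards [Ioo_mem_nhdsGT n2.1] with s hs
    exact (hB₂.r_pos s ⟨hs.1, hs.2.trans n2.2⟩).le)
  have hlt : a₂ < a₁ := by
    by_contra hcon
    rcases lt_or_eq_of_le (not_lt.1 hcon) with h | h
    · have m1 : a₂ ∈ Ioo a₁ M₁ := ⟨h, ha₂.trans n1.2⟩
      have hle : p₁ a₂ ≤ 0 := by
        refine le_of_tendsto_of_tendsto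
          ((hB₁.continuousAt_p m1).tendsto.mono_left nhdsWithin_le_nhds) hp₂ ?_
        filter_upwards [Ioo_mem_nhdsGT ha₂] with s hs
        exact (low s (h.trans hs.1) hs.1 hs.2.le).1.le
      linarith [hB₁.p_pos _ m1]
    · subst h
      have hD : c ≤ 2 * T₂' ^ 2 * F a₁ + K a₁ - (2 * T₁' ^ 2 * F a₁ + K a₁) := by
        refine ge_of_tendsto (hP₂.sub hP₁) ?_
        filter_upwards [Ioo_mem_nhdsGT ha₁] with s hs
        exact (low s hs.1 hs.1 hs.2.le).2
      have hFa := hN.F_pos _ (habs _ ha₁)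
      have hTT : T₁' < T₂' := by
        by_contra hcon
        have := pow_le_pow_left₀ hT₂ (not_lt.1 hcon) 2
        nlinarith
      have hev := hr₁.eventually_lt hr₂ hTT
      obtain ⟨t, ht, hsub⟩ := (mem_nhdsGT_iff_exists_mem_Ioc_Ioo_subset ha₁).1 hev
      obtain ⟨q, hq1, hq2⟩ := exists_between ht.1
      have hqβ : q < -β := hq2.trans_le ht.2
      have key : ∀ s ∈ Ioo a₁ q, p₂ q - p₁ q ≤ p₂ s - p₁ s := by
        intro s hs
        have m1 : ∀ u ∈ Icc s q, u ∈ Ioo a₁ M₁ := fun u hu =>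
          ⟨hs.1.trans_le hu.1, by linarith [hu.2]⟩
        have m2 : ∀ u ∈ Icc s q, u ∈ Ioo a₁ M₂ := fun u hu =>
          ⟨hs.1.trans_le hu.1, by linarith [hu.2]⟩
        have hder : ∀ u ∈ Icc s q, HasDerivAt (fun u => p₂ u - p₁ u)
            (d / r₂ u - f u / p₂ u - (d / r₁ u - f u / p₁ u)) u := fun u hu =>
          (hB₂.hasDerivAt_p u (m2 u hu)).sub (hB₁.hasDerivAt_p u (m1 u hu))
        refine le_of_hasDerivAt_nonpos (g := fun u => p₂ u - p₁ u) hs.2.le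
          (fun u hu => (hder u hu).continuousAt.continuousWithinAt)
          (fun u hu => hder u (Ioo_subset_Icc_self hu)) fun u hu => ?_
        have hu' := Ioo_subset_Icc_self hu
        have hru : r₁ u < r₂ u := hsub ⟨hs.1.trans hu.1, hu.2.trans hq2⟩
        have hpu := (low u (m1 u hu').1 (m1 u hu').1 (hu.2.trans hqβ).le).1
        have hfu : f u < 0 := by
          have := hN.f_pos (-u) (by linarith [hu.2])
          rw [hN.odd] at this
          linarith
        have e1 : d / r₂ u ≤ d / r₁ u :=
          div_le_div_of_nonneg_left hd.le (hB₁.r_pos u (m1 u hu')) hru.le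
        have e2 : (-f u) / p₂ u ≤ (-f u) / p₁ u :=
          div_le_div_of_nonneg_left (by linarith) (hB₁.p_pos u (m1 u hu')) hpu.le
        rw [neg_div, neg_div] at e2
        linarith
      have hle : p₂ q - p₁ q ≤ 0 - 0 := ge_of_tendsto (hp₂.sub hp₁) (by
        filter_upwards [Ioo_mem_nhdsGT hq1] with s hs using key s hs)
      linarith [(low q hq1 hq1 hqβ.le).1]
  refine ⟨hlt, ?_⟩
  have m2 : a₁ ∈ Ioo a₂ M₂ := ⟨hlt, ha₁.trans n2.2⟩
  have h1 : pohozaev f F K r₂ p₂ a₁ ≤ 2 * T₂' ^ 2 * F a₂ + K a₂ := by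
    refine ge_of_tendsto hP₂ ?_
    filter_upwards [Ioo_mem_nhdsGT hlt] with s hs
    exact hB₂.pohozaev_le hN hs.1 hs.2.le m2.2 (fun u hu => habs u (hu.2.trans ha₁))
      (habs s (hs.2.trans ha₁)).le (habs _ ha₁).le
  have h2 : c ≤ pohozaev f F K r₂ p₂ a₁ - (2 * T₁' ^ 2 * F a₁ + K a₁) := by
    refine ge_of_tendsto (((hB₂.continuousAt_pohozaev hN m2
      (habs _ ha₁).le).tendsto.mono_left nhdsWithin_le_nhds).sub hP₁) ?_
    filter_upwards [Ioo_mem_nhdsGT ha₁] with s hs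
    exact (low s hs.1 (hlt.trans hs.1) hs.2.le).2
  linarith

/-! ### Decaying solutions and their first monotone branch -/

/-- `v`, with derivative `w`, solves `v'' + (d / r) v' + f v = 0` on `(T, ∞)`, starts with zero
slope at `T` and decays at infinity. -/
structure DecayingSolution (d : ℝ) (f : ℝ → ℝ) (T : ℝ) (v w : ℝ → ℝ) : Prop where
  T_nonneg : 0 ≤ T
  continuousOn : ContinuousOn v (Ici T)
  hasDerivAt : ∀ x, T < x → HasDerivAt v (w x) x
  hasDerivAt_slope : ∀ x, T < x → HasDerivAt w (-(d / x * w x) - f (v x)) x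
  tendsto_slope : Tendsto w (𝓝[>] T) (𝓝 0)
  tendsto_zero : Tendsto v atTop (𝓝 0)

variable {v w v₁ w₁ v₂ w₂ : ℝ → ℝ}

theorem DecayingSolution.neg (hS : DecayingSolution d f T v w) (hodd : ∀ s, f (-s) = -f s) :
    DecayingSolution d f T (fun x => -v x) (fun x => -w x) where
  T_nonneg := hS.T_nonneg
  continuousOn := hS.continuousOn.neg
  hasDerivAt x hx := (hS.hasDerivAt x hx).neg
  hasDerivAt_slope x hx := (hS.hasDerivAt_slope x hx).neg.congr_deriv (by rw [hodd]; ring)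
  tendsto_slope := by simpa using hS.tendsto_slope.neg
  tendsto_zero := by simpa using hS.tendsto_zero.neg

theorem DecayingSolution.mono (hS : DecayingSolution d f T v w) {T' : ℝ} (hT : T < T')
    (hw : w T' = 0) : DecayingSolution d f T' v w where
  T_nonneg := hS.T_nonneg.trans hT.le
  continuousOn := hS.continuousOn.mono (Ici_subset_Ici.2 hT.le)
  hasDerivAt x hx := hS.hasDerivAt x (hT.trans hx)
  hasDerivAt_slope x hx := hS.hasDerivAt_slope x (hT.trans hx)
  tendsto_slope := by
    have := (hS.hasDerivAt_slope T' hT).continuousAt.tendsto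
    rw [hw] at this
    exact this.mono_left nhdsWithin_le_nhds
  tendsto_zero := hS.tendsto_zero

theorem DecayingSolution.hasDerivAt_energy (hS : DecayingSolution d f T v w)
    (hF : ∀ s, HasDerivAt F (f s) s) {x : ℝ} (hx : T < x) :
    HasDerivAt (fun y => w y ^ 2 + 2 * F (v y)) (-(2 * d / x * w x ^ 2)) x := by
  refine (((hS.hasDerivAt_slope x hx).pow 2).add
    (((hF (v x)).comp x (hS.hasDerivAt x hx)).const_mul 2)).congr_deriv ?_
  ring

theorem DecayingSolution.energy_le (hS : DecayingSolution d f T v w)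
    (hN : Nonlinearity d f F K β) {x y : ℝ} (hx : T < x) (hxy : x ≤ y) :
    w y ^ 2 + 2 * F (v y) ≤ w x ^ 2 + 2 * F (v x) := by
  refine le_of_hasDerivAt_nonpos (g := fun y => w y ^ 2 + 2 * F (v y)) hxy
    (fun u hu => (hS.hasDerivAt_energy hN.hasDerivAt_F
      (hx.trans_le hu.1)).continuousAt.continuousWithinAt)
    (fun u hu => hS.hasDerivAt_energy hN.hasDerivAt_F (hx.trans hu.1)) fun u hu => ?_
  have h0 : 0 < u := (hS.T_nonneg.trans_lt hx).trans hu.1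
  have h1 : 0 ≤ d := by linarith [hN.one_le_d]
  have : 0 ≤ 2 * d / u * w u ^ 2 := by positivity
  linarith

theorem DecayingSolution.energy_nonneg (hS : DecayingSolution d f T v w)
    (hN : Nonlinearity d f F K β) {x : ℝ} (hx : T < x) : 0 ≤ w x ^ 2 + 2 * F (v x) := by
  by_contra hneg
  have hlim : Tendsto (fun y => 2 * F (v y)) atTop (𝓝 (2 * F 0)) :=
    ((hN.continuous_F.tendsto 0).comp hS.tendsto_zero).const_mul 2
  rw [hN.F_zero, mul_zero] at hlim
  obtain ⟨y, hy1, hy2⟩ := ((hlim.eventually_const_lt (not_le.1 hneg)).and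
    (eventually_ge_atTop x)).exists
  have := hS.energy_le hN hx hy2
  nlinarith [sq_nonneg (w y)]

theorem DecayingSolution.energy_le_initial (hS : DecayingSolution d f T v w)
    (hN : Nonlinearity d f F K β) {x : ℝ} (hx : T < x) :
    w x ^ 2 + 2 * F (v x) ≤ 2 * F (v T) := by
  have hv : Tendsto v (𝓝[>] T) (𝓝 (v T)) :=
    (hS.continuousOn T self_mem_Ici).mono_left (nhdsWithin_mono _ Ioi_subset_Ici_self)
  have hlim := (hS.tendsto_slope.pow 2).add
    (((hN.continuous_F.tendsto (v T)).comp hv).const_mul 2)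
  have := ge_of_tendsto hlim (b := w x ^ 2 + 2 * F (v x)) (by
    filter_upwards [Ioo_mem_nhdsGT hx] with y hy using hS.energy_le hN hy.1 hy.2.le)
  simpa using this

theorem DecayingSolution.eq_zero_of_energy (hS : DecayingSolution d f T v w)
    (hN : Nonlinearity d f F K β) {x : ℝ} (hx : T < x) (hE : w x ^ 2 + 2 * F (v x) ≤ 0) :
    ∀ y, x ≤ y → v y = 0 ∧ w y = 0 := by
  have hd : 0 < d := by linarith [hN.one_le_d]
  have hE0 : ∀ y, x ≤ y → w y ^ 2 + 2 * F (v y) = 0 := fun y hy =>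
    le_antisymm ((hS.energy_le hN hx hy).trans hE) (hS.energy_nonneg hN (hx.trans_le hy))
  have hw : ∀ y, x < y → w y = 0 := by
    intro y hy
    have h1 := hS.hasDerivAt_energy hN.hasDerivAt_F (hx.trans hy)
    have h2 : HasDerivAt (fun y => w y ^ 2 + 2 * F (v y)) 0 y := by
      refine (hasDerivAt_const y (0 : ℝ)).congr_of_eventuallyEq ?_
      filter_upwards [Ioi_mem_nhds hy] with z hz using hE0 z (le_of_lt hz)
    have h3 := h1.unique h2
    have h4 : 0 < y := (hS.T_nonneg.trans_lt hx).trans hy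
    have h5 : 0 < 2 * d / y := by positivity
    have h6 : w y ^ 2 = 0 := by
      rcases mul_eq_zero.1 (neg_eq_zero.1 h3) with h | h
      · exact absurd h h5.ne'
      · exact h
    exact pow_eq_zero_iff (two_ne_zero) |>.1 h6
  have hv : ∀ y, x ≤ y → v y = 0 := by
    intro y hy
    have hconst : ∀ z, y ≤ z → v z = v y := by
      intro z hz
      have hder : ∀ u, y < u → HasDerivAt v 0 u := fun u hu => by
        rw [← hw u (hy.trans_lt hu)]
        exact hS.hasDerivAt u (hx.trans (hy.trans_lt hu))
      have hc : ContinuousOn v (Icc y z) := hS.continuousOn.mono fun u hu =>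
        (hx.le.trans hy).trans hu.1
      refine le_antisymm (le_of_hasDerivAt_nonpos hz hc (fun u hu => hder u hu.1)
        fun u _ => le_rfl) ?_
      have := le_of_hasDerivAt_nonpos (g := fun u => -v u) hz hc.neg
        (fun u hu => (hder u hu.1).neg) fun u _ => by simp
      linarith
    have h1 : Tendsto v atTop (𝓝 (v y)) := tendsto_const_nhds.congr' (by
      filter_upwards [eventually_ge_atTop y] with z hz using (hconst z hz).symm)
    exact tendsto_nhds_unique h1 hS.tendsto_zero
  refine fun y hy => ⟨hv y hy, ?_⟩
  have := hE0 y hy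
  rw [hv y hy, hN.F_zero, mul_zero, add_zero] at this
  exact pow_eq_zero_iff (two_ne_zero) |>.1 this

/-- A decaying solution starting at a positive value starts above `β`. -/
theorem DecayingSolution.beta_lt (hS : DecayingSolution d f T v w)
    (hN : Nonlinearity d f F K β) (h0 : 0 < v T) : β < v T := by
  by_contra hle
  have hF := hN.F_nonpos (v T) (by rw [abs_of_pos h0]; exact not_lt.1 hle)
  have hz : ∀ x, T < x → v x = 0 := fun x hx =>
    (hS.eq_zero_of_energy hN hx ((hS.energy_le_initial hN hx).trans (by linarith)) x le_rfl).1
  have hv : Tendsto v (𝓝[>] T) (𝓝 (v T)) :=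
    (hS.continuousOn T self_mem_Ici).mono_left (nhdsWithin_mono _ Ioi_subset_Ici_self)
  have : Tendsto v (𝓝[>] T) (𝓝 0) := tendsto_const_nhds.congr' (by
    filter_upwards [self_mem_nhdsWithin] with x hx using (hz x hx).symm)
  exact h0.ne' (tendsto_nhds_unique hv this)

/-- The slope is negative as long as `f v` stays positive. -/
theorem DecayingSolution.slope_neg (hS : DecayingSolution d f T v w) (hd : 0 < d) {R : ℝ}
    (hR : T < R) (hf : ∀ x ∈ Ioo T R, 0 < f (v x)) : w R < 0 := by
  have hder : ∀ x, T < x → HasDerivAt (fun x => x ^ d * w x) (-(x ^ d * f (v x))) x := by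
    intro x hx
    have h0 : 0 < x := hS.T_nonneg.trans_lt hx
    refine ((Real.hasDerivAt_rpow_const (p := d) (Or.inl h0.ne')).mul
      (hS.hasDerivAt_slope x hx)).congr_deriv ?_
    rw [Real.rpow_sub_one h0.ne']
    field_simp
    ring
  have hneg : ∀ s t, T < s → s < t → t ≤ R → t ^ d * w t < s ^ d * w s := by
    intro s t hs hst ht
    refine lt_of_hasDerivAt_neg (g := fun x => x ^ d * w x) hst
      (fun u hu => (hder u (hs.trans_le hu.1)).continuousAt.continuousWithinAt)
      (fun u hu => hder u (hs.trans hu.1)) fun u hu => ?_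
    have h0 : 0 < u := (hS.T_nonneg.trans_lt hs).trans hu.1
    have := mul_pos (Real.rpow_pos_of_pos h0 d) (hf u ⟨hs.trans hu.1, hu.2.trans_le ht⟩)
    linarith
  obtain ⟨m, hm1, hm2⟩ := exists_between hR
  have hlim : Tendsto (fun x => x ^ d * w x) (𝓝[>] T) (𝓝 (T ^ d * 0)) :=
    (((Real.continuousAt_rpow_const T d (Or.inr hd.le)).tendsto).mono_left
      nhdsWithin_le_nhds).mul hS.tendsto_slope
  have h1 : m ^ d * w m ≤ T ^ d * 0 := ge_of_tendsto hlim (by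
    filter_upwards [Ioo_mem_nhdsGT hm1] with s hs using (hneg s m hs.1 hs.2 hm2.le).le)
  have h2 := hneg m R hm1 hm2 le_rfl
  have h3 := Real.rpow_pos_of_pos (hS.T_nonneg.trans_lt hR) d
  by_contra hcon
  have := mul_nonneg h3.le (not_lt.1 hcon)
  linarith

/-- Inverse function of a strictly decreasing differentiable function on an open set. -/
theorem exists_inverse {U : Set ℝ} (hU : IsOpen U)
    (hd : ∀ x ∈ U, HasDerivAt v (w x) x) (hw : ∀ x ∈ U, w x < 0) (hanti : StrictAntiOn v U)
    (himg : v '' U = Ioo a M) :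
    ∃ r : ℝ → ℝ, (∀ s ∈ Ioo a M, r s ∈ U ∧ v (r s) = s ∧ HasDerivAt r (w (r s))⁻¹ s) ∧
      ∀ x ∈ U, r (v x) = x := by
  set r := Function.invFunOn v U with hr
  have h1 : ∀ s ∈ Ioo a M, r s ∈ U ∧ v (r s) = s := by
    intro s hs
    rw [← himg] at hs
    exact ⟨Function.invFunOn_mem hs, Function.invFunOn_eq hs⟩
  have h2 : ∀ x ∈ U, r (v x) = x := fun x hx => hanti.injOn.leftInvOn_invFunOn hx
  refine ⟨r, fun s hs => ⟨(h1 s hs).1, (h1 s hs).2, ?_⟩, h2⟩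
  have hmono : MonotoneOn (fun s => -r s) (Ioo a M) := by
    intro s hs t ht hst
    refine neg_le_neg (le_of_not_gt fun hlt => ?_)
    have := hanti (h1 s hs).1 (h1 t ht).1 hlt
    rw [(h1 s hs).2, (h1 t ht).2] at this
    exact absurd hst (not_le.2 this)
  have hcont : ContinuousAt (fun s => -r s) s := by
    refine continuousAt_of_monotoneOn_of_image_mem_nhds hmono (isOpen_Ioo.mem_nhds hs) ?_
    refine mem_of_superset ((hU.preimage continuous_neg).mem_nhds (x := -r s) ?_) ?_
    · simpa using (h1 s hs).1
    · intro y hy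
      exact ⟨v (-y), himg ▸ mem_image_of_mem v hy, by simp [h2 _ hy]⟩
  have hcont' : ContinuousAt r s := by
    have := hcont.neg
    simp only [Pi.neg_def, neg_neg] at this
    exact this
  refine HasDerivAt.of_local_left_inverse hcont' (hd _ (h1 s hs).1) (hw _ (h1 s hs).1).ne ?_
  filter_upwards [isOpen_Ioo.mem_nhds hs] with t ht using (h1 t ht).2

/-- The branch of a solution over an interval where it is decreasing. -/
theorem DecayingSolution.exists_branch (hS : DecayingSolution d f T v w)
    (hN : Nonlinearity d f F K β) {U : Set ℝ} (hU : IsOpen U) (hUT : ∀ x ∈ U, T < x)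
    (hTU : U ∈ 𝓝[>] T) (hw : ∀ x ∈ U, w x < 0) (hanti : StrictAntiOn v U)
    (himg : v '' U = Ioo a (v T)) (haT : a < v T) :
    ∃ r p : ℝ → ℝ, Branch d f F a (v T) T r p ∧
      (∀ s ∈ Ioo a (v T), r s ∈ U ∧ v (r s) = s) ∧ (∀ x ∈ U, r (v x) = x) ∧
      ∀ s, p s = -w (r s) := by
  obtain ⟨r, hr1, hr2⟩ := exists_inverse hU (fun x hx => hS.hasDerivAt x (hUT x hx)) hw hanti
    himg
  have hrT : Tendsto r (𝓝[<] (v T)) (𝓝[>] T) := by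
    refine tendsto_nhdsWithin_iff.2 ⟨?_, ?_⟩
    · refine (nhds_basis_Ioo T).tendsto_right_iff.2 fun ⟨l, u⟩ ⟨hl, hu⟩ => ?_
      obtain ⟨x, hx, hxU⟩ := Filter.nonempty_of_mem (inter_mem (Ioo_mem_nhdsGT hu) hTU)
      have hvx : v x ∈ Ioo a (v T) := himg ▸ mem_image_of_mem v hxU
      filter_upwards [Ioo_mem_nhdsLT hvx.2] with s hs
      have hs' : s ∈ Ioo a (v T) := ⟨hvx.1.trans hs.1, hs.2⟩
      obtain ⟨h1, h2, -⟩ := hr1 s hs'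
      refine ⟨lt_trans hl (hUT _ h1), lt_trans ?_ hx.2⟩
      by_contra hcon
      have := hanti.antitoneOn hxU h1 (not_lt.1 hcon)
      rw [h2] at this
      exact absurd this (not_le.2 hs.1)
    · filter_upwards [Ioo_mem_nhdsLT haT] with s hs using hUT _ (hr1 s hs).1
  refine ⟨r, fun s => -w (r s), ?_, fun s hs => ⟨(hr1 s hs).1, (hr1 s hs).2.1⟩, hr2,
    fun s => rfl⟩
  constructor
  · exact fun s hs => hS.T_nonneg.trans_lt (hUT _ (hr1 s hs).1)
  · exact fun s hs => neg_pos.2 (hw _ (hr1 s hs).1)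
  · intro s hs
    refine (hr1 s hs).2.2.congr_deriv ?_
    rw [one_div, inv_neg, neg_neg]
  · intro s hs
    obtain ⟨h1, h2, h3⟩ := hr1 s hs
    have h4 := (hw _ h1).ne
    have h5 := (hS.T_nonneg.trans_lt (hUT _ h1)).ne'
    refine (((hS.hasDerivAt_slope _ (hUT _ h1)).comp s h3).neg).congr_deriv ?_
    rw [h2]
    field_simp
    ring
  · intro s hs
    obtain ⟨h1, h2, -⟩ := hr1 s hs
    by_contra hcon
    refine (hw _ h1).ne (hS.eq_zero_of_energy hN (hUT _ h1) ?_ _ le_rfl).2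
    rw [h2]
    simpa using hcon
  · exact hrT.mono_right nhdsWithin_le_nhds
  · simpa using (hS.tendsto_slope.comp hrT).neg

theorem not_signChange_of_nonneg (hv : ∀ x, T < x → 0 ≤ v x) {z : ℝ} (hz : T < z) :
    ¬SignChange v z := by
  intro h
  obtain ⟨x, hx, hlt⟩ := (h.2 (z - T) (sub_pos.2 hz)).2
  exact absurd (hv x (by linarith [hx.1.1])) (not_le.2 hlt)

theorem SignChange.neg {z : ℝ} (h : SignChange v z) : SignChange (fun x => -v x) z := by
  refine ⟨by simp [h.1], fun ε hε => ?_⟩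
  obtain ⟨⟨x, hx, h1⟩, ⟨y, hy, h2⟩⟩ := h.2 ε hε
  exact ⟨⟨y, hy, neg_pos.2 h2⟩, ⟨x, hx, neg_neg_iff_pos.2 h1⟩⟩

theorem signChange_neg_iff {z : ℝ} : SignChange (fun x => -v x) z ↔ SignChange v z :=
  ⟨fun h => by simpa using SignChange.neg h, SignChange.neg⟩

theorem DecayingSolution.strictAntiOn (hS : DecayingSolution d f T v w) {U : Set ℝ}
    (hU : Convex ℝ U) (hUT : U ⊆ Ici T) (hw : ∀ x ∈ interior U, w x < 0) :
    StrictAntiOn v U := by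
  refine strictAntiOn_of_deriv_neg hU (hS.continuousOn.mono hUT) fun x hx => ?_
  have hx' : T < x := by
    have := interior_mono hUT hx
    rwa [interior_Ici] at this
  rw [(hS.hasDerivAt x hx').deriv]
  exact hw x hx

/-- The slope of a solution starting above `β` is negative near the starting point. -/
theorem DecayingSolution.exists_slope_neg (hS : DecayingSolution d f T v w)
    (hN : Nonlinearity d f F K β) (hM : β < v T) :
    ∃ c, T < c ∧ ∀ x ∈ Ioc T c, w x < 0 := by
  have hv : Tendsto v (𝓝[>] T) (𝓝 (v T)) :=
    (hS.continuousOn T self_mem_Ici).mono_left (nhdsWithin_mono _ Ioi_subset_Ici_self)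
  obtain ⟨c, hc, hsub⟩ := (mem_nhdsGT_iff_exists_Ioo_subset).1 (hv.eventually_const_lt hM)
  obtain ⟨e, he1, he2⟩ := exists_between (show T < c from hc)
  refine ⟨e, he1, fun x hx => hS.slope_neg (by linarith [hN.one_le_d]) hx.1 fun y hy => ?_⟩
  exact hN.f_pos _ (le_of_lt (hsub ⟨hy.1, hy.2.trans (hx.2.trans_lt he2)⟩))

/-- The first monotone piece of a decaying solution starting above `β`: either the solution
decreases to zero without changing sign, or it reaches a minimum below `-β` after exactly one
sign change. -/
theorem DecayingSolution.dichotomy (hS : DecayingSolution d f T v w)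
    (hN : Nonlinearity d f F K β) (hM : β < v T) :
    (∃ r p, Branch d f F 0 (v T) T r p ∧ (¬∃ δ > 0, ∀ s ∈ Ioo 0 β, δ ≤ r s * p s) ∧
      ∀ z, T < z → ¬SignChange v z) ∨
    ∃ T' r p, v T' < -β ∧ Branch d f F (v T') (v T) T r p ∧
      Tendsto r (𝓝[>] (v T')) (𝓝 T') ∧ Tendsto p (𝓝[>] (v T')) (𝓝 0) ∧
      DecayingSolution d f T' (fun x => -v x) (fun x => -w x) ∧
      ∃ z₀, z₀ ≤ T' ∧ {z | T < z ∧ SignChange v z} =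
        insert z₀ {z | T' < z ∧ SignChange (fun x => -v x) z} := by
  have hβ0 := hN.beta_pos
  have hd : 0 < d := by linarith [hN.one_le_d]
  obtain ⟨c, hc, hcw⟩ := hS.exists_slope_neg hN hM
  by_cases hall : ∀ x, T < x → w x < 0
  · -- decreasing forever
    left
    have hanti := hS.strictAntiOn (convex_Ici T) le_rfl
      fun x hx => hall x (by rwa [interior_Ici] at hx)
    have hpos : ∀ x, T ≤ x → 0 < v x := by
      intro x hx
      have h1 : 0 ≤ v (x + 1) := le_of_tendsto hS.tendsto_zero (by
        filter_upwards [eventually_ge_atTop (x + 1)] with y hy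
        exact hanti.antitoneOn (show T ≤ x + 1 by linarith) (show T ≤ y by linarith) hy)
      have h2 := hanti (show T ≤ x from hx) (show T ≤ x + 1 by linarith) (by linarith)
      linarith
    have himg : v '' Ioi T = Ioo 0 (v T) := by
      apply Subset.antisymm
      · rintro _ ⟨x, hx, rfl⟩
        exact ⟨hpos x (le_of_lt hx), hanti self_mem_Ici (Ioi_subset_Ici_self hx) hx⟩
      · intro s hs
        obtain ⟨y, hy1, hy2⟩ := ((hS.tendsto_zero.eventually_lt_const hs.1).and
          (eventually_gt_atTop T)).exists
        obtain ⟨x, hx, rfl⟩ := intermediate_value_Ioo' hy2.le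
          (hS.continuousOn.mono Icc_subset_Ici_self) ⟨hy1, hs.2⟩
        exact ⟨x, hx.1, rfl⟩
    obtain ⟨r, p, hB, hr1, hr2, hp⟩ := hS.exists_branch hN isOpen_Ioi (fun x hx => hx)
      self_mem_nhdsWithin hall (hanti.mono Ioi_subset_Ici_self) himg (hβ0.trans hM)
    refine ⟨r, p, hB, ?_, fun z => not_signChange_of_nonneg fun x hx => (hpos x hx.le).le⟩
    rintro ⟨δ, hδ, hle⟩
    obtain ⟨x₀, hx₀⟩ := ((hS.tendsto_zero.eventually_lt_const hβ0).and
      (eventually_gt_atTop T)).exists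
    have hslope : ∀ x, x₀ ≤ x → δ ≤ x * (-w x) := by
      intro x hx
      have hx' : T < x := hx₀.2.trans_le hx
      have h1 := hle (v x) ⟨hpos x hx'.le,
        (hanti.antitoneOn hx₀.2.le hx'.le hx).trans_lt hx₀.1⟩
      rwa [hp, hr2 x hx'] at h1
    have hx₀pos : 0 < x₀ := hS.T_nonneg.trans_lt hx₀.2
    have hbound : ∀ x, x₀ ≤ x → v x + δ * Real.log x ≤ v x₀ + δ * Real.log x₀ := by
      intro x hx
      have hder : ∀ y, x₀ ≤ y → HasDerivAt (fun x => v x + δ * Real.log x)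
          (w y + δ * y⁻¹) y := fun y hy =>
        (hS.hasDerivAt y (hx₀.2.trans_le hy)).add
          ((Real.hasDerivAt_log (hx₀pos.trans_le hy).ne').const_mul δ)
      refine le_of_hasDerivAt_nonpos (g := fun x => v x + δ * Real.log x) hx
        (fun y hy => (hder y hy.1).continuousAt.continuousWithinAt)
        (fun y hy => hder y hy.1.le) fun y hy => ?_
      have hy0 : 0 < y := hx₀pos.trans hy.1
      have h1 := hslope y hy.1.le
      have h2 : δ * y⁻¹ ≤ -w y := by
        rw [← div_eq_mul_inv, div_le_iff₀ hy0]
        linarith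
      linarith
    have hlog : Tendsto (fun x => δ * Real.log x) atTop atTop :=
      Real.tendsto_log_atTop.const_mul_atTop hδ
    obtain ⟨x, hx1, hx2⟩ := ((hlog.eventually_gt_atTop (v x₀ + δ * Real.log x₀)).and
      (eventually_ge_atTop x₀)).exists
    linarith [hbound x hx2, hpos x (hx₀.2.le.trans hx2)]
  · push Not at hall
    obtain ⟨x₁, hx₁, hwx₁⟩ := hall
    have hcx : c < x₁ := by
      by_contra hcon
      exact absurd hwx₁ (not_le.2 (hcw x₁ ⟨hx₁, not_lt.1 hcon⟩))
    have hwc : ∀ x, T < x → ContinuousAt w x := fun x hx =>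
      (hS.hasDerivAt_slope x hx).continuousAt
    have hclosed : IsClosed (Icc c x₁ ∩ w ⁻¹' Ici 0) :=
      ContinuousOn.preimage_isClosed_of_isClosed
        (fun x hx => (hwc x (hc.trans_le hx.1)).continuousWithinAt) isClosed_Icc isClosed_Ici
    obtain ⟨T', ⟨hT'1, hT'2⟩, hmin⟩ := (isCompact_Icc.of_isClosed_subset hclosed
      inter_subset_left).exists_isLeast ⟨x₁, ⟨hcx.le, le_rfl⟩, hwx₁⟩
    have hTT' : T < T' := hc.trans_le hT'1.1
    have hwneg : ∀ x ∈ Ioo T T', w x < 0 := by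
      intro x hx
      rcases le_or_gt x c with h | h
      · exact hcw x ⟨hx.1, h⟩
      · by_contra hcon
        exact absurd (hmin ⟨⟨h.le, hx.2.le.trans hT'1.2⟩, not_lt.1 hcon⟩) (not_le.2 hx.2)
    have hwT' : w T' = 0 := by
      refine le_antisymm ?_ hT'2
      refine le_of_tendsto ((hwc T' hTT').tendsto.mono_left
        (nhdsWithin_le_nhds (s := Iio T'))) ?_
      filter_upwards [Ioo_mem_nhdsLT hTT'] with x hx using (hwneg x hx).le
    have hanti := hS.strictAntiOn (convex_Icc T T') Icc_subset_Ici_self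
      fun x hx => hwneg x (by rwa [interior_Icc] at hx)
    have mT : T ∈ Icc T T' := left_mem_Icc.2 hTT'.le
    have mT' : T' ∈ Icc T T' := right_mem_Icc.2 hTT'.le
    have himg : v '' Ioo T T' = Ioo (v T') (v T) := by
      apply Subset.antisymm
      · rintro _ ⟨x, hx, rfl⟩
        exact ⟨hanti (Ioo_subset_Icc_self hx) mT' hx.2, hanti mT (Ioo_subset_Icc_self hx) hx.1⟩
      · exact intermediate_value_Ioo' hTT'.le (hS.continuousOn.mono Icc_subset_Ici_self)
    obtain ⟨r, p, hB, hr1, hr2, hp⟩ := hS.exists_branch hN isOpen_Ioo (fun x hx => hx.1)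
      (Ioo_mem_nhdsGT hTT') hwneg (hanti.mono Ioo_subset_Icc_self) himg (hanti mT mT' hTT')
    have hrT' : Tendsto r (𝓝[>] (v T')) (𝓝 T') := by
      refine (nhds_basis_Ioo T').tendsto_right_iff.2 fun ⟨l, u⟩ ⟨hl, hu⟩ => ?_
      obtain ⟨x, hx1, hx2⟩ := exists_between (max_lt hl hTT')
      have hx : x ∈ Ioo T T' := ⟨(le_max_right _ _).trans_lt hx1, hx2⟩
      have hvx : v x ∈ Ioo (v T') (v T) := himg ▸ mem_image_of_mem v hx
      filter_upwards [Ioo_mem_nhdsGT hvx.1] with s hs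
      obtain ⟨h1, h2⟩ := hr1 s ⟨hs.1, hs.2.trans hvx.2⟩
      refine ⟨((le_max_left _ _).trans_lt hx1).trans ?_, h1.2.trans hu⟩
      by_contra hcon
      have := hanti.antitoneOn (Ioo_subset_Icc_self h1) (Ioo_subset_Icc_self hx)
        (not_lt.1 hcon)
      rw [h2] at this
      exact absurd this (not_le.2 hs.2)
    have hpT' : Tendsto p (𝓝[>] (v T')) (𝓝 0) := by
      have h := ((hwc T' hTT').tendsto.comp hrT').neg
      rw [hwT', neg_zero] at h
      exact h.congr fun s => (hp s).symm
    by_cases hE : w T' ^ 2 + 2 * F (v T') ≤ 0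
    · left
      have hzero := hS.eq_zero_of_energy hN hTT' hE
      have hvT' := (hzero T' le_rfl).1
      rw [hvT'] at hB hrT' hpT'
      refine ⟨r, p, hB, ?_, fun z => not_signChange_of_nonneg fun x hx => ?_⟩
      · rintro ⟨δ, hδ, hle⟩
        have : δ ≤ T' * 0 := ge_of_tendsto (hrT'.mul hpT') (by
          filter_upwards [Ioo_mem_nhdsGT hβ0] with s hs using hle s hs)
        linarith
      · rcases le_total x T' with h | h
        · rw [← hvT']
          exact hanti.antitoneOn ⟨hx.le, h⟩ mT' h
        · exact (hzero x h).1.ge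
    · right
      have hF : 0 < F (v T') := by
        rw [hwT'] at hE
        linarith [not_le.1 hE]
      have habs : β < |v T'| := by
        by_contra hcon
        linarith [hN.F_nonpos _ (not_lt.1 hcon)]
      have hneg : v T' < -β := by
        rcases lt_abs.1 habs with h | h
        · exfalso
          refine (hS.slope_neg hd hTT' fun x hx => hN.f_pos _ ?_).ne hwT'
          exact h.le.trans (hanti.antitoneOn (Ioo_subset_Icc_self hx) mT' hx.2.le)
        · linarith
      refine ⟨T', r, p, hneg, hB, hrT', hpT', (hS.mono hTT' hwT').neg hN.odd, ?_⟩
      obtain ⟨z₀, hz₀, hvz₀⟩ := (himg.ge : Ioo (v T') (v T) ⊆ _)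
        (show (0 : ℝ) ∈ Ioo (v T') (v T) from ⟨by linarith, by linarith⟩)
      refine ⟨z₀, hz₀.2.le, Subset.antisymm ?_ ?_⟩
      · rintro z ⟨hz, hsc⟩
        rcases le_or_gt z T' with h | h
        · left
          exact hanti.injOn ⟨hz.le, h⟩ (Ioo_subset_Icc_self hz₀) (hsc.1.trans hvz₀.symm)
        · exact Or.inr ⟨h, SignChange.neg hsc⟩
      · rintro z (rfl | ⟨hz, hsc⟩)
        · refine ⟨hz₀.1, hvz₀, fun ε hε => ⟨?_, ?_⟩⟩
          · obtain ⟨x, hx1, hx2⟩ := exists_between (max_lt (sub_lt_self z hε) hz₀.1)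
            have hxT : T < x := (le_max_right _ _).trans_lt hx1
            refine ⟨x, ⟨⟨(le_max_left _ _).trans_lt hx1, by linarith⟩,
              hS.T_nonneg.trans_lt hxT⟩, ?_⟩
            rw [← hvz₀]
            exact hanti ⟨hxT.le, (hx2.trans hz₀.2).le⟩ (Ioo_subset_Icc_self hz₀) hx2
          · obtain ⟨x, hx1, hx2⟩ := exists_between (lt_min (lt_add_of_pos_right z hε) hz₀.2)
            have hxT : T < x := hz₀.1.trans hx1
            refine ⟨x, ⟨⟨by linarith, hx2.trans_le (min_le_left _ _)⟩,
              hS.T_nonneg.trans_lt hxT⟩, ?_⟩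
            rw [← hvz₀]
            exact hanti (Ioo_subset_Icc_self hz₀)
              ⟨hxT.le, (hx2.trans_le (min_le_right _ _)).le⟩ hx1
        · exact ⟨hTT'.trans hz, signChange_neg_iff.1 hsc⟩

/-- Two decaying solutions with the same number of sign changes cannot start at different
heights compatible with the comparison of the functionals. -/
theorem DecayingSolution.not_lt_of_signChanges (hN : Nonlinearity d f F K β) (m : ℕ) :
    ∀ {T₁ T₂ : ℝ} {v₁ w₁ v₂ w₂ : ℝ → ℝ}, DecayingSolution d f T₁ v₁ w₁ →
      DecayingSolution d f T₂ v₂ w₂ → β < v₁ T₁ → v₁ T₁ < v₂ T₂ →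
      2 * T₁ ^ 2 * F (v₁ T₁) + K (v₁ T₁) ≤ 2 * T₂ ^ 2 * F (v₂ T₂) + K (v₂ T₂) →
      (d = 1 ∨ 2 * T₁ ^ 2 * F (v₁ T₁) + K (v₁ T₁) < 2 * T₂ ^ 2 * F (v₂ T₂) + K (v₂ T₂)) →
      {z | T₁ < z ∧ SignChange v₁ z}.encard = m → {z | T₂ < z ∧ SignChange v₂ z}.encard = m →
      False := by
  have hempty : ∀ {T : ℝ} {v : ℝ → ℝ}, (∀ z, T < z → ¬SignChange v z) →
      {z | T < z ∧ SignChange v z}.encard = 0 := fun h =>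
    encard_eq_zero.2 (eq_empty_of_forall_notMem fun z hz => h z hz.1 hz.2)
  have hins : ∀ {T z₀ : ℝ} {v : ℝ → ℝ}, z₀ ≤ T →
      (insert z₀ {z | T < z ∧ SignChange v z}).encard =
        {z | T < z ∧ SignChange v z}.encard + 1 := fun h =>
    encard_insert_of_notMem fun hz => absurd hz.1 (not_lt.2 h)
  induction m with
  | zero =>
    intro T₁ T₂ v₁ w₁ v₂ w₂ h₁ h₂ hM₁ hM hQ hQ' hc₁ hc₂
    rcases h₁.dichotomy hN hM₁ with ⟨r₁, p₁, hB₁, -, -⟩ | ⟨_, _, _, _, _, _, _, _, z, hz, heq⟩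
    · rcases h₂.dichotomy hN (hM₁.trans hM) with
        ⟨r₂, p₂, hB₂, hn, -⟩ | ⟨_, _, _, _, _, _, _, _, z, hz, heq⟩
      · exact hn (hB₁.exists_le_mul_of_comparison hB₂ hN hM₁ hM hQ hQ')
      · rw [heq, hins hz] at hc₂
        simp at hc₂
    · rw [heq, hins hz] at hc₁
      simp at hc₁
  | succ m ih =>
    intro T₁ T₂ v₁ w₁ v₂ w₂ h₁ h₂ hM₁ hM hQ hQ' hc₁ hc₂
    rcases h₁.dichotomy hN hM₁ with ⟨_, _, _, _, hn⟩ |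
      ⟨T₁', r₁, p₁, ha₁, hB₁, hr₁, hp₁, hS₁, z₁, hz₁, heq₁⟩
    · rw [hempty hn] at hc₁
      exact absurd (by exact_mod_cast hc₁) m.succ_ne_zero.symm
    rcases h₂.dichotomy hN (hM₁.trans hM) with ⟨_, _, _, _, hn⟩ |
      ⟨T₂', r₂, p₂, ha₂, hB₂, hr₂, hp₂, hS₂, z₂, hz₂, heq₂⟩
    · rw [hempty hn] at hc₂
      exact absurd (by exact_mod_cast hc₂) m.succ_ne_zero.symm
    obtain ⟨hlt, hQlt⟩ := hB₁.end_comparison hB₂ hN hM₁ hM hQ hQ' ha₁ ha₂ hr₁ hp₁ hr₂ hp₂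
    rw [heq₁, hins hz₁] at hc₁
    rw [heq₂, hins hz₂] at hc₂
    push_cast at hc₁ hc₂
    have hcan : ∀ {x : ℕ∞}, x + 1 = (m : ℕ∞) + 1 → x = m := fun h =>
      by simpa using h
    rw [← hN.F_even (v₁ T₁'), ← hN.F_even (v₂ T₂'), ← hN.K_even (v₁ T₁'),
      ← hN.K_even (v₂ T₂')] at hQlt
    exact ih hS₁ hS₂ (by linarith) (by linarith) hQlt.le (Or.inr hQlt) (hcan hc₁) (hcan hc₂)

/-! ### The hypotheses on the nonlinearity -/

theorem hasDerivAt_Fint (hf : Continuous f) (s : ℝ) : HasDerivAt (Fint f) (f s) s :=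
  (hf.integral_hasStrictDerivAt 0 s).hasDerivAt

theorem Fint_neg (hodd : ∀ s, f (-s) = -f s) (s : ℝ) : Fint f (-s) = Fint f s := by
  have h := intervalIntegral.integral_comp_neg (a := s) (b := 0) f
  simp only [hodd, neg_zero] at h
  rw [intervalIntegral.integral_neg, intervalIntegral.integral_symm, neg_neg] at h
  exact h.symm

theorem Fint_nonpos (hf : Continuous f) {b : ℝ} (h1 : Hf1 f b β) {s : ℝ} (hs : |s| ≤ β) :
    Fint f s ≤ 0 := by
  obtain ⟨hodd, -, hb, hbβ, hpos, hneg, -, hFβ⟩ := h1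
  have hc : Continuous (Fint f) :=
    continuous_iff_continuousAt.2 fun t => (hasDerivAt_Fint hf t).continuousAt
  have habs : Fint f |s| = Fint f s := by
    rcases abs_choice s with h | h <;> rw [h]
    exact Fint_neg hodd s
  rw [← habs]
  rcases le_total |s| b with h | h
  · have := le_of_hasDerivAt_nonpos (abs_nonneg s) hc.continuousOn
      (fun x _ => hasDerivAt_Fint hf x) fun x hx => hneg x ⟨hx.1.le, hx.2.le.trans h⟩
    simpa [Fint] using this
  · have := le_of_hasDerivAt_nonpos (g := fun x => -Fint f x) hs hc.neg.continuousOn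
      (fun x _ => (hasDerivAt_Fint hf x).neg)
      fun x hx => neg_nonpos.2 (hpos x (h.trans_lt hx.1)).le
    linarith

theorem Fint_pos (hf : Continuous f) {b : ℝ} (h1 : Hf1 f b β) {s : ℝ} (hs : β < s) :
    0 < Fint f s := by
  obtain ⟨hodd, -, hb, hbβ, hpos, hneg, -, hFβ⟩ := h1
  have hc : Continuous (Fint f) :=
    continuous_iff_continuousAt.2 fun t => (hasDerivAt_Fint hf t).continuousAt
  have := lt_of_hasDerivAt_neg (g := fun x => -Fint f x) hs hc.neg.continuousOn
    (fun x _ => (hasDerivAt_Fint hf x).neg) fun x hx => neg_neg_iff_pos.2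
      (hpos x (hbβ.trans hx.1))
  linarith

/-- An even primitive of `4 (d - 1) F / f` outside `[-β, β]`. -/
noncomputable def quotientPrimitive (d : ℝ) (f : ℝ → ℝ) (β s : ℝ) : ℝ :=
  4 * (d - 1) * ∫ t in β..|s|, Fint f (max t β) / f (max t β)

theorem nonlinearity_of_hypotheses {n : ℕ} {b : ℝ} (hn : 2 ≤ n) (hf : Continuous f)
    (h1 : Hf1 f b β) (h2 : Hf2 f) (h4 : Hf4' n f β) :
    Nonlinearity ((n : ℝ) - 1) f (Fint f) (quotientPrimitive ((n : ℝ) - 1) f β) β := by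
  have hn' : (2 : ℝ) ≤ n := by exact_mod_cast hn
  obtain ⟨hodd, -, hb, hbβ, hpos, -, -, hFβ⟩ := id h1
  have hβ : 0 < β := hb.trans hbβ
  have hc : Continuous (Fint f) :=
    continuous_iff_continuousAt.2 fun t => (hasDerivAt_Fint hf t).continuousAt
  set q : ℝ → ℝ := fun t => Fint f (max t β) / f (max t β) with hq
  have hqc : Continuous q := by
    have h0 : ∀ t, f (max t β) ≠ 0 := fun t => (hpos _ (hbβ.trans_le (le_max_right _ _))).ne'
    fun_prop (disch := assumption)
  have hG : ∀ s, HasDerivAt (fun s => ∫ t in β..s, q t) (q s) s := fun s =>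
    (hqc.integral_hasStrictDerivAt β s).hasDerivAt
  have hFodd : ∀ t, Fint f (-t) / f (-t) = -(Fint f t / f t) := fun t => by
    rw [Fint_neg hodd, hodd, div_neg]
  have hquot : ∀ s, β < s → ((n : ℝ) - 1 - 1) / 2 ≤ deriv (fun t => Fint f t / f t) s ∧
      HasDerivAt (fun t => Fint f t / f t) (deriv (fun t => Fint f t / f t) s) s := by
    intro s hs
    refine ⟨by convert h4 s hs using 2; ring, ?_⟩
    exact ((hasDerivAt_Fint hf s).differentiableAt.div (h2.2.1 s (hβ.trans hs))
      (hpos s (hbβ.trans hs)).ne').hasDerivAt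
  have hKd : ∀ s, β < |s| → HasDerivAt (quotientPrimitive ((n : ℝ) - 1) f β)
      (4 * ((n : ℝ) - 1 - 1) * (Fint f s / f s)) s := by
    intro s hs
    have hqs : q |s| = Fint f |s| / f |s| := by simp only [hq, max_eq_left hs.le]
    rcases lt_abs.1 hs with h | h
    · refine (((hG |s|).comp s (hasDerivAt_abs_pos (hβ.trans h))).const_mul
        (4 * ((n : ℝ) - 1 - 1))).congr_deriv ?_
      rw [hqs, abs_of_pos (hβ.trans h), mul_one]
    · refine (((hG |s|).comp s (hasDerivAt_abs_neg (by linarith))).const_mul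
        (4 * ((n : ℝ) - 1 - 1))).congr_deriv ?_
      rw [hqs, abs_of_neg (by linarith), hFodd]
      ring
  have hKc : Continuous (quotientPrimitive ((n : ℝ) - 1) f β) :=
    continuous_const.mul ((continuous_iff_continuousAt.2
      fun s => (hG s).continuousAt).comp continuous_abs)
  refine
    { one_le_d := by linarith
      beta_pos := hβ
      continuous_f := hf
      odd := hodd
      hasDerivAt_F := hasDerivAt_Fint hf
      F_even := Fint_neg hodd
      F_zero := by simp [Fint]
      F_beta := hFβ
      F_nonpos := fun s hs => Fint_nonpos hf h1 hs
      F_pos := ?_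
      f_pos := fun s hs => hpos s (hbβ.trans_le hs)
      quotient_deriv := ?_
      K_even := fun s => by simp only [quotientPrimitive, abs_neg]
      K_continuous := hKc
      K_deriv := hKd
      K_mono := ?_ }
  · intro s hs
    rcases lt_abs.1 hs with h | h
    · exact Fint_pos hf h1 h
    · rw [← Fint_neg hodd]
      exact Fint_pos hf h1 h
  · intro s hs
    rcases lt_abs.1 hs with h | h
    · exact ⟨_, hquot s h⟩
    · obtain ⟨e1, e2⟩ := hquot (-s) h
      refine ⟨_, e1, ?_⟩
      have := (e2.comp s (hasDerivAt_neg s)).neg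
      refine (this.congr_deriv (by ring)).congr_of_eventuallyEq (Eventually.of_forall fun t => ?_)
      simp [hFodd t]
  · intro s hs t ht hst
    have := le_of_hasDerivAt_nonpos (g := fun x => -quotientPrimitive ((n : ℝ) - 1) f β x) hst
      hKc.neg.continuousOn (fun x hx => (hKd x (lt_abs.2 (Or.inl
        (lt_of_le_of_lt hs hx.1)))).neg) fun x hx => ?_
    · linarith
    · have hx' : β < x := lt_of_le_of_lt hs hx.1
      have := div_pos (Fint_pos hf h1 hx') (hpos x (hbβ.trans hx'))
      have h3 : 0 ≤ 4 * ((n : ℝ) - 1 - 1) := by linarith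
      have := mul_nonneg h3 this.le
      linarith

theorem Nonlinearity.K_lt (hN : Nonlinearity d f F K β) (hd : 1 < d) {s t : ℝ} (hs : β ≤ s)
    (hst : s < t) : K s < K t := by
  have hab : ∀ x ∈ Ioo s t, β < |x| := fun x hx => lt_abs.2 (Or.inl (hs.trans_lt hx.1))
  have := lt_of_hasDerivAt_neg (g := fun x => -K x) hst hN.K_continuous.neg.continuousOn
    (fun x hx => (hN.K_deriv x (hab x hx)).neg) fun x hx => ?_
  · linarith
  · have h1 := div_pos (hN.F_pos x (hab x hx)) (hN.f_pos x (hs.trans hx.1.le))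
    have h2 : 0 < 4 * (d - 1) := by linarith
    have := mul_pos h2 h1
    linarith

/-! ### Regularity at the origin -/

theorem slope_le_of_bounded {φ : ℝ → ℝ} {B : ℝ} (hd : 1 ≤ d) (hB : 0 ≤ B)
    (hc : ContinuousOn v (Ici 0)) (hv : ∀ x, 0 < x → HasDerivAt v (w x) x)
    (hw : ∀ x, 0 < x → HasDerivAt w (-(d / x * w x) - φ x) x)
    (hφ : ∀ x ∈ Ioc (0 : ℝ) 1, -B ≤ φ x) : ∀ x ∈ Ioc (0 : ℝ) 1, w x ≤ B * x := by
  intro x₀ hx₀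
  by_contra hcon
  have hder : ∀ x, 0 < x → HasDerivAt (fun x => x ^ d * w x - B * x ^ (d + 1))
      (-(x ^ d * (φ x + B * (d + 1)))) x := by
    intro x hx
    refine (((Real.hasDerivAt_rpow_const (p := d) (Or.inl hx.ne')).mul (hw x hx)).sub
      ((Real.hasDerivAt_rpow_const (p := d + 1) (Or.inl hx.ne')).const_mul B)).congr_deriv ?_
    rw [Real.rpow_sub_one hx.ne', add_sub_cancel_right]
    field_simp
    ring
  set η := x₀ ^ d * w x₀ - B * x₀ ^ (d + 1) with hη
  have hη0 : 0 < η := by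
    have h1 := Real.rpow_pos_of_pos hx₀.1 d
    have h2 := mul_lt_mul_of_pos_left (not_le.1 hcon) h1
    rw [hη, Real.rpow_add_one hx₀.1.ne']
    linarith
  have hge : ∀ x ∈ Ioc 0 x₀, η ≤ x ^ d * w x - B * x ^ (d + 1) := by
    intro x hx
    refine le_of_hasDerivAt_nonpos (g := fun x => x ^ d * w x - B * x ^ (d + 1)) hx.2
      (fun y hy => (hder y (hx.1.trans_le hy.1)).continuousAt.continuousWithinAt)
      (fun y hy => hder y (hx.1.trans hy.1)) fun y hy => ?_
    have hy0 : 0 < y := hx.1.trans hy.1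
    have h1 := hφ y ⟨hy0, hy.2.le.trans hx₀.2⟩
    have h2 : 0 ≤ φ y + B * (d + 1) := by nlinarith
    have := mul_nonneg (Real.rpow_pos_of_pos hy0 d).le h2
    linarith
  have hslope : ∀ x ∈ Ioc 0 x₀, η * x⁻¹ ≤ w x := by
    intro x hx
    have h1 := hge x hx
    have h2 : 0 ≤ B * x ^ (d + 1) := mul_nonneg hB (Real.rpow_pos_of_pos hx.1 _).le
    have h3 : x ^ d ≤ x := by
      have := Real.rpow_le_rpow_of_exponent_ge hx.1 (hx.2.trans hx₀.2) hd
      rwa [Real.rpow_one] at this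
    have h4 := Real.rpow_pos_of_pos hx.1 d
    have h5 : 0 < w x := by
      by_contra hneg
      have := mul_nonneg h4.le (neg_nonneg.2 (not_lt.1 hneg))
      linarith
    rw [← div_eq_mul_inv, div_le_iff₀ hx.1]
    nlinarith
  have hlog : ∀ x ∈ Ioc 0 x₀, v x ≤ v x₀ - η * Real.log x₀ + η * Real.log x := by
    intro x hx
    have hder' : ∀ y, 0 < y → HasDerivAt (fun x => η * Real.log x - v x) (η * y⁻¹ - w y) y :=
      fun y hy => ((Real.hasDerivAt_log hy.ne').const_mul η).sub (hv y hy)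
    have := le_of_hasDerivAt_nonpos (g := fun x => η * Real.log x - v x) hx.2
      (fun y hy => (hder' y (hx.1.trans_le hy.1)).continuousAt.continuousWithinAt)
      (fun y hy => hder' y (hx.1.trans hy.1))
      fun y hy => sub_nonpos.2 (hslope y ⟨hx.1.trans hy.1, hy.2.le⟩)
    linarith
  have hvlim : Tendsto v (𝓝[>] 0) (𝓝 (v 0)) :=
    (hc 0 self_mem_Ici).mono_left (nhdsWithin_mono _ Ioi_subset_Ici_self)
  have hbot : Tendsto (fun x => v x₀ - η * Real.log x₀ + η * Real.log x) (𝓝[>] 0) atBot :=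
    tendsto_atBot_add_const_left _ _ (Real.tendsto_log_nhdsGT_zero.const_mul_atBot hη0)
  have hvbot : Tendsto v (𝓝[>] 0) atBot := tendsto_atBot_mono' _ (by
    filter_upwards [Ioc_mem_nhdsGT hx₀.1] with x hx using hlog x hx) hbot
  exact not_tendsto_nhds_of_tendsto_atBot hvbot _ hvlim

/-- A solution which is continuous at the origin has vanishing slope there. -/
theorem tendsto_slope_zero (hd : 1 ≤ d) (hf : Continuous f)
    (hc : ContinuousOn v (Ici 0)) (hv : ∀ x, 0 < x → HasDerivAt v (w x) x)
    (hw : ∀ x, 0 < x → HasDerivAt w (-(d / x * w x) - f (v x)) x) :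
    Tendsto w (𝓝[>] 0) (𝓝 0) := by
  obtain ⟨B, hB⟩ := (isCompact_Icc (a := (0 : ℝ)) (b := 1)).exists_bound_of_continuousOn
    (f := fun x => f (v x)) (hf.comp_continuousOn (hc.mono Icc_subset_Ici_self))
  have hB0 : 0 ≤ B := (norm_nonneg _).trans (hB 0 ⟨le_rfl, zero_le_one⟩)
  have h1 := slope_le_of_bounded hd hB0 hc hv hw
    fun x hx => (abs_le.1 (hB x ⟨hx.1.le, hx.2⟩)).1
  have h2 := slope_le_of_bounded (v := fun x => -v x) (w := fun x => -w x)
    (φ := fun x => -f (v x)) hd hB0 hc.neg (fun x hx => (hv x hx).neg)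
    (fun x hx => (hw x hx).neg.congr_deriv (by ring))
    fun x hx => neg_le_neg (abs_le.1 (hB x ⟨hx.1.le, hx.2⟩)).2
  have hlim : Tendsto (fun x => B * x) (𝓝[>] 0) (𝓝 0) := by
    have : Tendsto (fun x => B * x) (𝓝 0) (𝓝 (B * 0)) := (continuous_const_mul B).tendsto 0
    rw [mul_zero] at this
    exact this.mono_left nhdsWithin_le_nhds
  refine squeeze_zero_norm' ?_ hlim
  filter_upwards [Ioc_mem_nhdsGT zero_lt_one] with x hx
  exact abs_le.2 ⟨by linarith [h2 x hx], h1 x hx⟩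

theorem decayingSolution_of_boundState {n : ℕ} (hn : 2 ≤ n) (hf : Continuous f)
    (hs : BoundState n f v) : DecayingSolution ((n : ℝ) - 1) f 0 v (deriv v) := by
  obtain ⟨hc, hdiff, heq, -, hlim⟩ := hs
  have hn' : (2 : ℝ) ≤ n := by exact_mod_cast hn
  have hv : ∀ x, 0 < x → HasDerivAt v (deriv v x) x := fun x hx => (hdiff x hx).1.hasDerivAt
  have hw : ∀ x, 0 < x → HasDerivAt (deriv v)
      (-(((n : ℝ) - 1) / x * deriv v x) - f (v x)) x := fun x hx =>
    (hdiff x hx).2.hasDerivAt.congr_deriv (by linarith [heq x hx])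
  exact ⟨le_rfl, hc, hv, hw, tendsto_slope_zero (by linarith) hf hc hv hw, hlim⟩

/-- Bound states with equally many sign changes have the same initial value. -/
theorem not_initial_lt {n : ℕ} (hn : 2 ≤ n) {b : ℝ} {m : ℕ} (hf : Continuous f)
    (h1 : Hf1 f b β) (h2 : Hf2 f) (h4 : Hf4' n f β) {u₁ u₂ : ℝ → ℝ}
    (hs₁ : BoundState n f u₁) (hs₂ : BoundState n f u₂) (hp₁ : 0 < u₁ 0)
    (hc₁ : ExactSignChanges u₁ m) (hc₂ : ExactSignChanges u₂ m) : ¬u₁ 0 < u₂ 0 := by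
  intro hlt
  have hN := nonlinearity_of_hypotheses hn hf h1 h2 h4
  have hS₁ := decayingSolution_of_boundState hn hf hs₁
  have hS₂ := decayingSolution_of_boundState hn hf hs₂
  have hβ := hS₁.beta_lt hN hp₁
  have hcard : ∀ {u : ℝ → ℝ}, ExactSignChanges u m →
      {z | 0 < z ∧ SignChange u z}.encard = m := fun h => by
    rw [← h.1.cast_ncard_eq, h.2]
  refine DecayingSolution.not_lt_of_signChanges hN m hS₁ hS₂ hβ hlt ?_ ?_ (hcard hc₁)
    (hcard hc₂)
  · simpa using hN.K_mono hβ.le (hβ.trans hlt).le hlt.le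
  · rcases hN.one_le_d.eq_or_lt with h | h
    · exact Or.inl h.symm
    · exact Or.inr (by simpa using hN.K_lt h hβ.le hlt)

/-! ### Uniqueness for the initial value problem -/

theorem DecayingSolution.exists_local_inverse (hS : DecayingSolution d f T v w) {x : ℝ}
    (hx : T < x) (hw : w x < 0) :
    ∃ r : ℝ → ℝ, (∀ᶠ y in 𝓝 x, r (v y) = y) ∧ ∀ᶠ s in 𝓝 (v x), v (r s) = s ∧
      HasDerivAt r (-(1 / -w (r s))) s ∧
      HasDerivAt (fun s => -w (r s)) (d / r s - f s / -w (r s)) s := by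
  have hev : ∀ᶠ y in 𝓝 x, T < y ∧ w y < 0 :=
    (lt_mem_nhds hx).and ((hS.hasDerivAt_slope x hx).continuousAt.eventually_lt_const hw)
  obtain ⟨ε, hε, hsub⟩ := (nhds_basis_Icc_pos x).mem_iff.1 hev
  have hxε : x - ε < x + ε := by linarith
  have hanti := hS.strictAntiOn (convex_Icc (x - ε) (x + ε)) (fun y hy => (hsub hy).1.le)
    fun y hy => (hsub (interior_subset hy)).2
  have ml := left_mem_Icc.2 hxε.le
  have mr := right_mem_Icc.2 hxε.le
  have himg : v '' Ioo (x - ε) (x + ε) = Ioo (v (x + ε)) (v (x - ε)) := by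
    apply Subset.antisymm
    · rintro _ ⟨y, hy, rfl⟩
      exact ⟨hanti (Ioo_subset_Icc_self hy) mr hy.2, hanti ml (Ioo_subset_Icc_self hy) hy.1⟩
    · exact intermediate_value_Ioo' hxε.le (hS.continuousOn.mono fun y hy => (hsub hy).1.le)
  obtain ⟨r, hr1, hr2⟩ := exists_inverse isOpen_Ioo
    (fun y hy => hS.hasDerivAt y (hsub (Ioo_subset_Icc_self hy)).1)
    (fun y hy => (hsub (Ioo_subset_Icc_self hy)).2) (hanti.mono Ioo_subset_Icc_self) himg
  have hxm : x ∈ Ioo (x - ε) (x + ε) := ⟨by linarith, by linarith⟩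
  refine ⟨r, ?_, ?_⟩
  · filter_upwards [isOpen_Ioo.mem_nhds hxm] with y hy using hr2 y hy
  · filter_upwards [isOpen_Ioo.mem_nhds (himg ▸ mem_image_of_mem v hxm)] with s hs
    obtain ⟨h1, h2, h3⟩ := hr1 s hs
    obtain ⟨hT, hneg⟩ := hsub (Ioo_subset_Icc_self h1)
    refine ⟨h2, h3.congr_deriv ?_, ?_⟩
    · rw [one_div, inv_neg, neg_neg]
    · have h4 := hneg.ne
      have h5 := (hS.T_nonneg.trans_lt hT).ne'
      refine (((hS.hasDerivAt_slope _ hT).comp s h3).neg).congr_deriv ?_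
      rw [h2]
      field_simp
      ring

theorem DecayingSolution.eventually_eq_of_slope_neg (h₁ : DecayingSolution d f T v₁ w₁)
    (h₂ : DecayingSolution d f T v₂ w₂) (hf : Continuous f) {x : ℝ} (hx : T < x)
    (hv : v₁ x = v₂ x) (hw : w₁ x = w₂ x) (hneg : w₁ x < 0) :
    ∀ᶠ y in 𝓝 x, v₁ y = v₂ y ∧ w₁ y = w₂ y := by
  obtain ⟨r₁, hr₁, hs₁⟩ := h₁.exists_local_inverse hx hneg
  obtain ⟨r₂, hr₂, hs₂⟩ := h₂.exists_local_inverse hx (hw ▸ hneg)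
  rw [← hv] at hs₂
  have e1 : r₁ (v₁ x) = x := hr₁.self_of_nhds
  have e2 : r₂ (v₁ x) = x := by rw [hv]; exact hr₂.self_of_nhds
  have h := eventuallyEq_of_eq_at (p₁ := fun s => -w₁ (r₁ s)) (p₂ := fun s => -w₂ (r₂ s)) hf
    (hs₁.mono fun s h => h.2) (hs₂.mono fun s h => h.2)
    (by rw [e1]; exact h₁.T_nonneg.trans_lt hx) (by simp only [e1]; linarith)
    (e1.trans e2.symm) (by simp only [e1, e2, hw])
  have hcont : Tendsto v₁ (𝓝 x) (𝓝 (v₁ x)) := (h₁.hasDerivAt x hx).continuousAt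
  filter_upwards [hcont.eventually h, hcont.eventually hs₂, hr₁] with y hy hy2 hy1
  rw [hy1] at hy
  have h3 := hy2.1
  rw [← hy.1] at h3
  exact ⟨h3.symm, by rw [← hy.1] at hy; linarith [hy.2]⟩

theorem exists_lipschitzOnWith (hodd : ∀ s, f (-s) = -f s) (h2 : Hf2 f) {c : ℝ}
    (hc : c ≠ 0) : ∃ L, ∃ s ∈ 𝓝 c, LipschitzOnWith L f s := by
  have hpos : ∀ c, 0 < c → HasStrictDerivAt f (deriv f c) c := fun c hc =>
    hasStrictDerivAt_of_hasDerivAt_of_continuousAt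
      (by filter_upwards [lt_mem_nhds hc] with y hy using (h2.2.1 y hy).hasDerivAt)
      (h2.2.2.1.continuousAt (Ioi_mem_nhds hc))
  have key : ∃ f', HasStrictDerivAt f f' c := by
    rcases lt_or_gt_of_ne hc with h | h
    · have := ((hpos (-c) (by linarith)).comp c (hasStrictDerivAt_neg c)).neg
      refine ⟨_, this.congr_of_eventuallyEq (Eventually.of_forall fun t => ?_)⟩
      simp [hodd]
    · exact ⟨_, hpos c h⟩
  obtain ⟨f', hf'⟩ := key
  exact hf'.hasStrictFDerivAt.exists_lipschitzOnWith

theorem DecayingSolution.eventually_eq_of_ne_zero (h₁ : DecayingSolution d f T v₁ w₁)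
    (h₂ : DecayingSolution d f T v₂ w₂) (hd : 0 ≤ d) (hodd : ∀ s, f (-s) = -f s)
    (hf2 : Hf2 f) (hc₁ : ContinuousOn w₁ (Ici T)) (hc₂ : ContinuousOn w₂ (Ici T)) {x : ℝ}
    (hx : T ≤ x) (hv : v₁ x = v₂ x) (hw : w₁ x = w₂ x) (hne : v₁ x ≠ 0) :
    ∀ᶠ y in 𝓝[>] x, v₁ y = v₂ y ∧ w₁ y = w₂ y := by
  obtain ⟨L, s, hs, hL⟩ := exists_lipschitzOnWith hodd hf2 hne
  have hto : ∀ {v : ℝ → ℝ}, ContinuousOn v (Ici T) → Tendsto v (𝓝[>] x) (𝓝 (v x)) :=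
    fun h => (h x hx).mono_left (nhdsWithin_mono _ fun y hy => hx.trans (le_of_lt hy))
  have hev : ∀ᶠ y in 𝓝[>] x, v₁ y ∈ s ∧ v₂ y ∈ s :=
    ((hto h₁.continuousOn).eventually_mem hs).and
      ((hto h₂.continuousOn).eventually_mem (hv ▸ hs))
  obtain ⟨c, hc, hsub⟩ := mem_nhdsGT_iff_exists_Ioo_subset.1 hev
  filter_upwards [Ioo_mem_nhdsGT (show x < c from hc)] with y hy
  set e : ℝ → ℝ := fun z => ((v₁ z - v₂ z) ^ 2 + (w₁ z - w₂ z) ^ 2) *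
    Real.exp (-((1 + L) * z)) with he
  have hIcc : Icc x y ⊆ Ici T := fun z hz => hx.trans hz.1
  have hle : e y ≤ e x := by
    refine le_of_hasDerivAt_nonpos (g := e) hy.1.le ?_
      (fun z hz => ((((((h₁.hasDerivAt z (hx.trans_lt hz.1)).sub
        (h₂.hasDerivAt z (hx.trans_lt hz.1))).pow 2).add
        (((h₁.hasDerivAt_slope z (hx.trans_lt hz.1)).sub
        (h₂.hasDerivAt_slope z (hx.trans_lt hz.1))).pow 2)).mul
        (((hasDerivAt_id z).const_mul (1 + (L : ℝ))).neg.exp)))) ?_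
    · refine ContinuousOn.mul ?_ (by fun_prop)
      exact (((h₁.continuousOn.mono hIcc).sub (h₂.continuousOn.mono hIcc)).pow 2).add
        (((hc₁.mono hIcc).sub (hc₂.mono hIcc)).pow 2)
    · intro z hz
      have hz0 : 0 < z := h₁.T_nonneg.trans_lt (hx.trans_lt hz.1)
      obtain ⟨m1, m2⟩ := hsub (show z ∈ Ioo x c from ⟨hz.1, hz.2.trans hy.2⟩)
      have hlip : |f (v₁ z) - f (v₂ z)| ≤ L * |v₁ z - v₂ z| := by
        simpa [Real.dist_eq] using hL.dist_le_mul _ m1 _ m2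
      have hexp := Real.exp_pos (-((1 + (L : ℝ)) * z))
      simp only [Pi.pow_apply, Pi.sub_apply, Pi.add_apply, Pi.neg_apply, id]
      set A := v₁ z - v₂ z
      set B := w₁ z - w₂ z with hB
      set E := Real.exp (-((1 + (L : ℝ)) * z))
      set D := f (v₁ z) - f (v₂ z) with hD
      have hdz : 0 ≤ d / z * B ^ 2 := by positivity
      have hAB : -(B * D) ≤ L * (|A| * |B|) := by
        calc -(B * D) ≤ |B * D| := neg_le_abs _
          _ = |B| * |D| := abs_mul _ _
          _ ≤ |B| * (L * |A|) := by gcongr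
          _ = L * (|A| * |B|) := by ring
      have hab : 2 * (|A| * |B|) ≤ A ^ 2 + B ^ 2 := by
        have := two_mul_le_add_sq |A| |B|
        rw [sq_abs, sq_abs] at this
        linarith
      have hab' : 2 * (A * B) ≤ A ^ 2 + B ^ 2 := by linarith [two_mul_le_add_sq A B]
      have hL0 : (0 : ℝ) ≤ L := L.2
      have hLab : L * (2 * (|A| * |B|)) ≤ L * (A ^ 2 + B ^ 2) := by gcongr
      have key : 2 * A * B - 2 * (d / z * B ^ 2) - 2 * (B * D) - (1 + L) * (A ^ 2 + B ^ 2)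
          ≤ 0 := by linarith
      have := mul_nonneg (neg_nonneg.2 key) hexp.le
      have hexpand : B * (-(d / z * w₁ z) - f (v₁ z) - (-(d / z * w₂ z) - f (v₂ z))) =
          -(d / z * B ^ 2) - B * D := by rw [hB, hD]; ring
      refine le_of_eq_of_le (b := (2 * A * B +
        2 * (B * (-(d / z * w₁ z) - f (v₁ z) - (-(d / z * w₂ z) - f (v₂ z)))) -
          (1 + L) * (A ^ 2 + B ^ 2)) * E) ?_ ?_
      · push_cast
        ring
      · rw [hexpand]
        linarith
  have hex : e x = 0 := by simp [he, hv, hw]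
  rw [hex, he] at hle
  have h0 := nonpos_of_mul_nonpos_left hle (Real.exp_pos _)
  have hA : v₁ y - v₂ y = 0 := by nlinarith [sq_nonneg (v₁ y - v₂ y), sq_nonneg (w₁ y - w₂ y)]
  have hB : w₁ y - w₂ y = 0 := by nlinarith [sq_nonneg (v₁ y - v₂ y), sq_nonneg (w₁ y - w₂ y)]
  exact ⟨sub_eq_zero.1 hA, sub_eq_zero.1 hB⟩

theorem DecayingSolution.eqOn_of_initial_eq (h₁ : DecayingSolution d f T v₁ w₁)
    (h₂ : DecayingSolution d f T v₂ w₂) (hN : Nonlinearity d f F K β) (hf2 : Hf2 f)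
    (hw₁ : w₁ T = 0) (hw₂ : w₂ T = 0) (hv : v₁ T = v₂ T) (hv0 : v₁ T ≠ 0) :
    EqOn v₁ v₂ (Ici T) := by
  have hwc : ∀ {v w : ℝ → ℝ}, DecayingSolution d f T v w → w T = 0 →
      ContinuousOn w (Ici T) := by
    intro v w h h0 x hx
    rcases eq_or_lt_of_le (show T ≤ x from hx) with rfl | hlt
    · rw [← continuousWithinAt_Ioi_iff_Ici, ContinuousWithinAt, h0]
      exact h.tendsto_slope
    · exact (h.hasDerivAt_slope x hlt).continuousAt.continuousWithinAt
  have hc₁ := hwc h₁ hw₁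
  have hc₂ := hwc h₂ hw₂
  intro y hy
  have hIcc : Icc T y ⊆ Ici T := Icc_subset_Ici_self
  have hclosed : IsClosed ({x | v₁ x = v₂ x ∧ w₁ x = w₂ x} ∩ Icc T y) := by
    have e : {x | v₁ x = v₂ x ∧ w₁ x = w₂ x} ∩ Icc T y =
        Icc T y ∩ (fun x => (v₁ x - v₂ x, w₁ x - w₂ x)) ⁻¹' {0} := by
      ext x
      simp [sub_eq_zero, and_comm, Prod.ext_iff]
    rw [e]
    exact (((h₁.continuousOn.mono hIcc).sub (h₂.continuousOn.mono hIcc)).prodMk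
      ((hc₁.mono hIcc).sub (hc₂.mono hIcc))).preimage_isClosed_of_isClosed isClosed_Icc
      isClosed_singleton
  refine (hclosed.Icc_subset_of_forall_mem_nhdsWithin ⟨hv, hw₁.trans hw₂.symm⟩ ?_
    (right_mem_Icc.2 hy)).1
  rintro x ⟨⟨hvx, hwx⟩, hxm⟩
  by_cases hz : v₁ x = 0
  · have hx : T < x := lt_of_le_of_ne hxm.1 fun h => hv0 (by rw [h, hz])
    rcases lt_trichotomy (w₁ x) 0 with hn | hn | hn
    · exact nhdsWithin_le_nhds
        (h₁.eventually_eq_of_slope_neg h₂ hN.continuous_f hx hvx hwx hn)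
    · have e1 := h₁.eq_zero_of_energy hN hx (by simp [hz, hn, hN.F_zero])
      have e2 := h₂.eq_zero_of_energy hN hx (by simp [← hvx, ← hwx, hz, hn, hN.F_zero])
      filter_upwards [self_mem_nhdsWithin] with t ht
      obtain ⟨a1, a2⟩ := e1 t (le_of_lt ht)
      obtain ⟨b1, b2⟩ := e2 t (le_of_lt ht)
      exact ⟨a1.trans b1.symm, a2.trans b2.symm⟩
    · have := (h₁.neg hN.odd).eventually_eq_of_slope_neg (h₂.neg hN.odd) hN.continuous_f hx
        (neg_inj.2 hvx) (neg_inj.2 hwx) (neg_neg_iff_pos.2 hn)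
      exact nhdsWithin_le_nhds (this.mono fun t ht => ⟨neg_inj.1 ht.1, neg_inj.1 ht.2⟩)
  · exact h₁.eventually_eq_of_ne_zero h₂ (by linarith [hN.one_le_d]) hN.odd hf2 hc₁ hc₂
      hxm.1 hvx hwx hz

end RadialODE

/-- **Theorem 1.1.** For `2 ≤ n ≤ 4`, under (f1), (f2), (f4'), problem (P) has at most one
solution with `u 0 > 0` having exactly `k-1` sign changes in `(0,∞)`. -/
theorem uniqueness_kth_bound_state
    (n : ℕ) (hn2 : 2 ≤ n) (hn4 : n ≤ 4) (k : ℕ) (hk : 1 ≤ k)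
    (f : ℝ → ℝ) (b β : ℝ) (hf : Continuous f)
    (h1 : Hf1 f b β) (h2 : Hf2 f) (h4 : Hf4' n f β)
    (u₁ u₂ : ℝ → ℝ) (hs₁ : BoundState n f u₁) (hs₂ : BoundState n f u₂)
    (hp₁ : 0 < u₁ 0) (hp₂ : 0 < u₂ 0)
    (hc₁ : ExactSignChanges u₁ (k - 1)) (hc₂ : ExactSignChanges u₂ (k - 1)) :
    u₁ 0 = u₂ 0 ∧ EqOn u₁ u₂ (Ici 0) := by
  have h0 : u₁ 0 = u₂ 0 :=
    le_antisymm (not_lt.1 (RadialODE.not_initial_lt hn2 hf h1 h2 h4 hs₂ hs₁ hp₂ hc₂ hc₁))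
      (not_lt.1 (RadialODE.not_initial_lt hn2 hf h1 h2 h4 hs₁ hs₂ hp₁ hc₁ hc₂))
  exact ⟨h0, (RadialODE.decayingSolution_of_boundState hn2 hf hs₁).eqOn_of_initial_eq
    (RadialODE.decayingSolution_of_boundState hn2 hf hs₂)
    (RadialODE.nonlinearity_of_hypotheses hn2 hf h1 h2 h4) h2 hs₁.2.2.2.1 hs₂.2.2.2.1 h0
    hp₁.ne'⟩
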